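/- arXiv:2508.12805 — 3 statements merged into one kernel-verified Lean document; each statement's English description precedes it below -/
import Mathlib

section
/- K^nom has the finite bisimilar model property: for all ML^nom-formulas φ1, φ2 and σ = sig(φ1) ∩ sig(φ2), if there exist ML^nom-models M1, M2 and worlds w1, w2 such that M1,w1 ⊨ φ1, M2,w2 ⊨ φ2, and M1,w1 ∼_σ M2,w2, then there exist FINITE ML^nom-models M1', M2' and worlds w1', w2' such that M1',w1' ⊨ φ1, M2',w2' ⊨ φ2, and M1',w1' ∼_σ M2',w2'. -/
/-- Formulas of modal logic with nominals, ML^nom: propositional variables and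
nominals (both indexed by `ℕ`) combined with `⊤`, `∧`, `¬` and `◇`. -/
inductive MLn : Type
  | top : MLn
  | var : ℕ → MLn
  | nom : ℕ → MLn
  | and : MLn → MLn → MLn
  | not : MLn → MLn
  | dia : MLn → MLn

/-- `φ → ψ` as an abbreviation. -/
def MLn.impl (φ ψ : MLn) : MLn := .not (.and φ (.not ψ))

/-- The propositional variables occurring in a formula. -/
def MLn.sigP : MLn → Set ℕ
  | .top => ∅
  | .var p => {p}
  | .nom _ => ∅
  | .and φ ψ => φ.sigP ∪ ψ.sigP
  | .not φ => φ.sigP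
  | .dia φ => φ.sigP

/-- The nominals occurring in a formula. -/
def MLn.sigN : MLn → Set ℕ
  | .top => ∅
  | .var _ => ∅
  | .nom i => {i}
  | .and φ ψ => φ.sigN ∪ ψ.sigN
  | .not φ => φ.sigN
  | .dia φ => φ.sigN

/-- An ML^nom-model: a Kripke model in which, additionally, every nominal denotes
a single world (so that its valuation is a singleton subset). -/
structure KripkeN : Type 1 where
  W : Type
  nonempty : Nonempty W
  R : W → W → Prop
  V : ℕ → Set W
  N : ℕ → W

/-- Truth of an ML^nom-formula at a world. -/
def MLn.sat (M : KripkeN) : M.W → MLn → Prop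
  | _, .top => True
  | w, .var p => w ∈ M.V p
  | w, .nom i => M.N i = w
  | w, .and φ ψ => MLn.sat M w φ ∧ MLn.sat M w ψ
  | w, .not φ => ¬ MLn.sat M w φ
  | w, .dia φ => ∃ v, M.R w v ∧ MLn.sat M v φ

/-- A `σ`-bisimulation between ML^nom-models, where the signature `σ` is given by a
set `σP` of propositional variables together with a set `σN` of nominals. -/
def IsBisimulationN (σP σN : Set ℕ) (M₁ M₂ : KripkeN) (β : M₁.W → M₂.W → Prop) : Prop :=
  ∀ u₁ u₂, β u₁ u₂ →
    (∀ p ∈ σP, (u₁ ∈ M₁.V p ↔ u₂ ∈ M₂.V p)) ∧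
    (∀ i ∈ σN, (M₁.N i = u₁ ↔ M₂.N i = u₂)) ∧
    (∀ v₁, M₁.R u₁ v₁ → ∃ v₂, M₂.R u₂ v₂ ∧ β v₁ v₂) ∧
    (∀ v₂, M₂.R u₂ v₂ → ∃ v₁, M₁.R u₁ v₁ ∧ β v₁ v₂)

/-- `σ`-bisimilarity of two pointed ML^nom-models. -/
def BisimilarN (σP σN : Set ℕ) (M₁ M₂ : KripkeN) (w₁ : M₁.W) (w₂ : M₂.W) : Prop :=
  ∃ β : M₁.W → M₂.W → Prop, IsBisimulationN σP σN M₁ M₂ β ∧ β w₁ w₂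


/-- The set of subformulas. -/
def MLn.subf : MLn → Set MLn
  | .top => {.top}
  | .var p => {.var p}
  | .nom i => {.nom i}
  | .and φ ψ => {.and φ ψ} ∪ (φ.subf ∪ ψ.subf)
  | .not φ => {.not φ} ∪ φ.subf
  | .dia φ => {.dia φ} ∪ φ.subf

theorem MLn.subf_finite (φ : MLn) : φ.subf.Finite := by
  induction φ with
  | top => exact Set.finite_singleton _
  | var p => exact Set.finite_singleton _
  | nom p => exact Set.finite_singleton _
  | and a b iha ihb => exact (Set.finite_singleton _).union (iha.union ihb)
  | not a ih => exact (Set.finite_singleton _).union ih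
  | dia a ih => exact (Set.finite_singleton _).union ih

theorem MLn.var_mem_subf (φ : MLn) (p : ℕ) (h : p ∈ φ.sigP) : MLn.var p ∈ φ.subf := by
  induction φ <;> simp_all [MLn.sigP, MLn.subf]
  grind

theorem MLn.nom_mem_subf (φ : MLn) (p : ℕ) (h : p ∈ φ.sigN) : MLn.nom p ∈ φ.subf := by
  induction φ <;> simp_all [MLn.sigN, MLn.subf]
  grind

theorem MLn.self_mem_subf (φ : MLn) : φ ∈ φ.subf := by
  cases φ <;> simp [MLn.subf]

theorem BisimilarN.symm' {P N : Set ℕ} {A B : KripkeN} {a : A.W} {b : B.W}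
    (h : BisimilarN P N A B a b) : BisimilarN P N B A b a := by
  obtain ⟨β, hβ, hab⟩ := h
  refine ⟨fun x y => β y x, ?_, hab⟩
  intro x y hxy
  obtain ⟨h1, h2, h3, h4⟩ := hβ y x hxy
  exact ⟨fun p hp => (h1 p hp).symm, fun p hp => (h2 p hp).symm, h4, h3⟩

theorem BisimilarN.trans' {P N : Set ℕ} {A B C : KripkeN} {a : A.W} {b : B.W} {c : C.W}
    (h : BisimilarN P N A B a b) (h' : BisimilarN P N B C b c) : BisimilarN P N A C a c := by
  obtain ⟨β, hβ, hab⟩ := h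
  obtain ⟨γ, hγ, hbc⟩ := h'
  refine ⟨fun x z => ∃ y, β x y ∧ γ y z, ?_, b, hab, hbc⟩
  rintro x z ⟨y, hxy, hyz⟩
  obtain ⟨h1, h2, h3, h4⟩ := hβ x y hxy
  obtain ⟨k1, k2, k3, k4⟩ := hγ y z hyz
  refine ⟨fun p hp => (h1 p hp).trans (k1 p hp), fun p hp => (h2 p hp).trans (k2 p hp), ?_, ?_⟩
  · intro v hv
    obtain ⟨v', hv', e⟩ := h3 v hv
    obtain ⟨v'', hv'', e'⟩ := k3 v' hv'
    exact ⟨v'', hv'', v', e, e'⟩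
  · intro v hv
    obtain ⟨v', hv', e⟩ := k4 v hv
    obtain ⟨v'', hv'', e'⟩ := h4 v' hv'
    exact ⟨v'', hv'', v', e', e⟩

theorem BisimilarN.refl' {P N : Set ℕ} {A : KripkeN} (a : A.W) : BisimilarN P N A A a a := by
  refine ⟨Eq, ?_, rfl⟩
  rintro x _ rfl
  exact ⟨fun _ _ => Iff.rfl, fun _ _ => Iff.rfl, fun v hv => ⟨v, hv, rfl⟩, fun v hv => ⟨v, hv, rfl⟩⟩

/-- The largest bisimulation is a bisimulation. -/
theorem BisimilarN.isBisim {P N : Set ℕ} {A B : KripkeN} :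
    IsBisimulationN P N A B (BisimilarN P N A B) := by
  rintro x y ⟨β, hβ, hxy⟩
  obtain ⟨h1, h2, h3, h4⟩ := hβ x y hxy
  refine ⟨h1, h2, ?_, ?_⟩
  · intro v hv
    obtain ⟨v', hv', e⟩ := h3 v hv
    exact ⟨v', hv', β, hβ, e⟩
  · intro v hv
    obtain ⟨v', hv', e⟩ := h4 v hv
    exact ⟨v', hv', β, hβ, e⟩

/-- Minimal filtration along a map `key`. -/
def filtN (M : KripkeN) {K : Type} (key : M.W → K) : KripkeN where
  W := Set.range key
  nonempty := M.nonempty.map fun w => ⟨key w, w, rfl⟩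
  R x y := ∃ u v, key u = x.1 ∧ key v = y.1 ∧ M.R u v
  V p := {x | ∃ u, u ∈ M.V p ∧ key u = x.1}
  N i := ⟨key (M.N i), M.N i, rfl⟩

/-- The class of a world. -/
def filtN.mk (M : KripkeN) {K : Type} (key : M.W → K) (u : M.W) : (filtN M key).W :=
  ⟨key u, u, rfl⟩

theorem filtN.sat_iff (M : KripkeN) {K : Type} (key : M.W → K) (ψ : MLn)
    (h : ∀ χ ∈ ψ.subf, ∀ u v, key u = key v → (MLn.sat M u χ ↔ MLn.sat M v χ)) :
    ∀ u, MLn.sat (filtN M key) (filtN.mk M key u) ψ ↔ MLn.sat M u ψ := by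
  induction ψ with
  | top => intro u; simp [MLn.sat]
  | var p =>
    intro u
    constructor
    · rintro ⟨v, hv, e⟩
      exact (h _ (MLn.self_mem_subf _) v u e).1 hv
    · intro hu
      exact ⟨u, hu, rfl⟩
  | nom i =>
    intro u
    constructor
    · intro e
      exact (h _ (MLn.self_mem_subf _) (M.N i) u (congrArg Subtype.val e)).1 rfl
    · intro e
      change M.N i = u at e
      subst e
      rfl
  | and a b iha ihb =>
    intro u
    have ha := iha (fun χ hχ => h χ (Or.inr (Or.inl hχ))) u
    have hb := ihb (fun χ hχ => h χ (Or.inr (Or.inr hχ))) u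
    simp only [MLn.sat, ha, hb]
  | not a ih =>
    intro u
    have ha := ih (fun χ hχ => h χ (Or.inr hχ)) u
    simp only [MLn.sat, ha]
  | dia a ih =>
    intro u
    have ha := ih (fun χ hχ => h χ (Or.inr hχ))
    constructor
    · rintro ⟨⟨_, y, rfl⟩, ⟨u', v', e1, e2, hR⟩, hs⟩
      refine (h _ (MLn.self_mem_subf _) u' u e1).1 ⟨v', hR, ?_⟩
      have : filtN.mk M key v' = ⟨key y, y, rfl⟩ := Subtype.ext e2
      rw [← ha v', this]
      exact hs
    · rintro ⟨v, hR, hs⟩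
      exact ⟨filtN.mk M key v, ⟨u, v, rfl, rfl, hR⟩, (ha v).2 hs⟩

/-- The type of a world: the subformulas of `φ` true there. -/
def typN (φ : MLn) (M : KripkeN) (u : M.W) : Set MLn := {ψ | ψ ∈ φ.subf ∧ MLn.sat M u ψ}

/-- The types realized in `B` by worlds bisimilar to `u`. -/
def mosN (P N : Set ℕ) (φ : MLn) (B A : KripkeN) (u : A.W) : Set (Set MLn) :=
  {t | ∃ v, BisimilarN P N A B u v ∧ typN φ B v = t}

theorem mosN_congr {P N : Set ℕ} {φ : MLn} {B A A' : KripkeN} {u : A.W} {u' : A'.W}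
    (h : BisimilarN P N A A' u u') : mosN P N φ B A u = mosN P N φ B A' u' := by
  ext t
  exact ⟨fun ⟨v, hv, e⟩ => ⟨v, h.symm'.trans' hv, e⟩, fun ⟨v, hv, e⟩ => ⟨v, h.trans' hv, e⟩⟩

/-- The full key of a world: its type and its mosaic. -/
def keyN (P N : Set ℕ) (φ φ₁ φ₂ : MLn) (M₁ M₂ A : KripkeN) (u : A.W) :
    Set MLn × (Set (Set MLn) × Set (Set MLn)) :=
  (typN φ A u, mosN P N φ₁ M₁ A u, mosN P N φ₂ M₂ A u)

theorem keyN_finite (P N : Set ℕ) (φ φ₁ φ₂ : MLn) (M₁ M₂ A : KripkeN) :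
    (Set.range (keyN P N φ φ₁ φ₂ M₁ M₂ A)).Finite := by
  refine Set.Finite.subset (φ.subf_finite.finite_subsets.prod
    (φ₁.subf_finite.finite_subsets.finite_subsets.prod
      φ₂.subf_finite.finite_subsets.finite_subsets)) ?_
  rintro _ ⟨u, rfl⟩
  refine ⟨fun _ h => h.1, ?_, ?_⟩
  · rintro _ ⟨v, _, rfl⟩ ψ h
    exact h.1
  · rintro _ ⟨v, _, rfl⟩ ψ h
    exact h.1

theorem keyN_sat {P N : Set ℕ} {φ φ₁ φ₂ : MLn} {M₁ M₂ A : KripkeN} :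
    ∀ χ ∈ φ.subf, ∀ u v, keyN P N φ φ₁ φ₂ M₁ M₂ A u = keyN P N φ φ₁ φ₂ M₁ M₂ A v →
      (MLn.sat A u χ ↔ MLn.sat A v χ) := by
  intro χ hχ u v e
  have e1 : typN φ A u = typN φ A v := congrArg Prod.fst e
  have := Set.ext_iff.1 e1 χ
  simpa [typN, hχ] using this

/-- K^nom has the finite bisimilar model property. -/
theorem Knom_finite_bisimilar_model_property
    (φ₁ φ₂ : MLn) (σP σN : Set ℕ)
    (hσP : σP = φ₁.sigP ∩ φ₂.sigP) (hσN : σN = φ₁.sigN ∩ φ₂.sigN)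
    (M₁ M₂ : KripkeN) (w₁ : M₁.W) (w₂ : M₂.W)
    (h₁ : MLn.sat M₁ w₁ φ₁) (h₂ : MLn.sat M₂ w₂ φ₂)
    (hbis : BisimilarN σP σN M₁ M₂ w₁ w₂) :
    ∃ (M₁' M₂' : KripkeN) (w₁' : M₁'.W) (w₂' : M₂'.W),
      Finite M₁'.W ∧ Finite M₂'.W ∧
      MLn.sat M₁' w₁' φ₁ ∧ MLn.sat M₂' w₂' φ₂ ∧
      BisimilarN σP σN M₁' M₂' w₁' w₂' := by
  let k₁ := keyN σP σN φ₁ φ₁ φ₂ M₁ M₂ M₁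
  let k₂ := keyN σP σN φ₂ φ₁ φ₂ M₁ M₂ M₂
  have H₁ : ∀ u₁ u₁' u₂, k₁ u₁' = k₁ u₁ → BisimilarN σP σN M₁ M₂ u₁ u₂ →
      ∃ u₂', k₂ u₂' = k₂ u₂ ∧ BisimilarN σP σN M₁ M₂ u₁' u₂' := by
    intro u₁ u₁' u₂ e hb
    have e2 : mosN σP σN φ₁ M₁ M₁ u₁' = mosN σP σN φ₁ M₁ M₁ u₁ := congrArg (fun z => z.2.1) e
    have e3 : mosN σP σN φ₂ M₂ M₁ u₁' = mosN σP σN φ₂ M₂ M₁ u₁ := congrArg (fun z => z.2.2) e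
    have hm : typN φ₂ M₂ u₂ ∈ mosN σP σN φ₂ M₂ M₁ u₁' := by
      rw [e3]
      exact ⟨u₂, hb, rfl⟩
    obtain ⟨u₂', hb', ht⟩ := hm
    refine ⟨u₂', ?_, hb'⟩
    change (_, _, _) = (_, _, _)
    rw [ht, ← mosN_congr hb', ← mosN_congr hb', ← mosN_congr hb, ← mosN_congr hb, e2, e3]
  have H₂ : ∀ u₂ u₂' u₁, k₂ u₂' = k₂ u₂ → BisimilarN σP σN M₁ M₂ u₁ u₂ →
      ∃ u₁', k₁ u₁' = k₁ u₁ ∧ BisimilarN σP σN M₁ M₂ u₁' u₂' := by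
    intro u₂ u₂' u₁ e hb
    have e2 : mosN σP σN φ₁ M₁ M₂ u₂' = mosN σP σN φ₁ M₁ M₂ u₂ := congrArg (fun z => z.2.1) e
    have e3 : mosN σP σN φ₂ M₂ M₂ u₂' = mosN σP σN φ₂ M₂ M₂ u₂ := congrArg (fun z => z.2.2) e
    have hm : typN φ₁ M₁ u₁ ∈ mosN σP σN φ₁ M₁ M₂ u₂' := by
      rw [e2]
      exact ⟨u₁, hb.symm', rfl⟩
    obtain ⟨u₁', hb', ht⟩ := hm
    refine ⟨u₁', ?_, hb'.symm'⟩
    change (_, _, _) = (_, _, _)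
    rw [ht, ← mosN_congr hb', ← mosN_congr hb', mosN_congr hb, mosN_congr hb, e2, e3]
  have T₁ : ∀ χ ∈ φ₁.subf, ∀ u v, k₁ u = k₁ v → (MLn.sat M₁ u χ ↔ MLn.sat M₁ v χ) := keyN_sat
  have T₂ : ∀ χ ∈ φ₂.subf, ∀ u v, k₂ u = k₂ v → (MLn.sat M₂ u χ ↔ MLn.sat M₂ v χ) := keyN_sat
  refine ⟨filtN M₁ k₁, filtN M₂ k₂, filtN.mk M₁ k₁ w₁, filtN.mk M₂ k₂ w₂,
    (keyN_finite _ _ _ _ _ _ _ _).to_subtype, (keyN_finite _ _ _ _ _ _ _ _).to_subtype,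
    (filtN.sat_iff M₁ k₁ φ₁ T₁ w₁).2 h₁, (filtN.sat_iff M₂ k₂ φ₂ T₂ w₂).2 h₂,
    fun x₁ x₂ => ∃ u₁ u₂, filtN.mk M₁ k₁ u₁ = x₁ ∧ filtN.mk M₂ k₂ u₂ = x₂ ∧
      BisimilarN σP σN M₁ M₂ u₁ u₂, ?_, w₁, w₂, rfl, rfl, hbis⟩
  rintro _ _ ⟨u₁, u₂, rfl, rfl, hb⟩
  obtain ⟨b1, b2, -, -⟩ := BisimilarN.isBisim u₁ u₂ hb
  refine ⟨?_, ?_, ?_, ?_⟩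
  · intro p hp
    have hp' := hp
    rw [hσP] at hp'
    have s₁ := MLn.var_mem_subf φ₁ p hp'.1
    have s₂ := MLn.var_mem_subf φ₂ p hp'.2
    have f₁ := filtN.sat_iff M₁ k₁ (.var p) (fun χ hχ => T₁ χ (by
      rw [show χ = .var p from hχ]; exact s₁)) u₁
    have f₂ := filtN.sat_iff M₂ k₂ (.var p) (fun χ hχ => T₂ χ (by
      rw [show χ = .var p from hχ]; exact s₂)) u₂
    exact f₁.trans ((b1 p hp).trans f₂.symm)
  · intro p hp
    have hp' := hp
    rw [hσN] at hp'
    have s₁ := MLn.nom_mem_subf φ₁ p hp'.1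
    have s₂ := MLn.nom_mem_subf φ₂ p hp'.2
    have f₁ := filtN.sat_iff M₁ k₁ (.nom p) (fun χ hχ => T₁ χ (by
      rw [show χ = .nom p from hχ]; exact s₁)) u₁
    have f₂ := filtN.sat_iff M₂ k₂ (.nom p) (fun χ hχ => T₂ χ (by
      rw [show χ = .nom p from hχ]; exact s₂)) u₂
    exact f₁.trans ((b2 p hp).trans f₂.symm)
  · rintro y ⟨u₁', v₁, e1, e2, hR⟩
    obtain ⟨u₂', e3, hb'⟩ := H₁ u₁ u₁' u₂ e1 hb
    obtain ⟨v₂, hR', hv⟩ := (BisimilarN.isBisim u₁' u₂' hb').2.2.1 v₁ hR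
    exact ⟨filtN.mk M₂ k₂ v₂, ⟨u₂', v₂, e3, rfl, hR'⟩, v₁, v₂, Subtype.ext e2, rfl, hv⟩
  · rintro y ⟨u₂', v₂, e1, e2, hR⟩
    obtain ⟨u₁', e3, hb'⟩ := H₂ u₂ u₂' u₁ e1 hb
    obtain ⟨v₁, hR', hv⟩ := (BisimilarN.isBisim u₁' u₂' hb').2.2.2 v₂ hR
    exact ⟨filtN.mk M₁ k₁ v₁, ⟨u₁', v₁, e3, rfl, hR'⟩, v₁, v₂, rfl, Subtype.ext e2, hv⟩
end

section
/- (Schützenberger–McNaughton–Papert theorem.) For a regular language L ⊆ A⁺ over a finite alphabet A, the following are equivalent: (i) L is star-free; (ii) L is accepted by a counter-free DFA; (iii) L is recognised by a finite aperiodic semigroup; (iv) L is FO(<)-definable. -/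
open FirstOrder

/-! ### Star-free languages -/

/-- The star-free languages over `A`: the smallest class containing `A⁺` and the
singletons `{a}`, closed under concatenation, union and complementation (in `A⁺`). -/
inductive StarFree {A : Type} : Set (List A) → Prop
  | all : StarFree {w | w ≠ []}
  | single (a : A) : StarFree {[a]}
  | concat {L₁ L₂ : Set (List A)} : StarFree L₁ → StarFree L₂ →
      StarFree {w | ∃ u ∈ L₁, ∃ v ∈ L₂, w = u ++ v}
  | union {L₁ L₂ : Set (List A)} : StarFree L₁ → StarFree L₂ → StarFree (L₁ ∪ L₂)
  | compl {L₀ : Set (List A)} : StarFree L₀ → StarFree ({w | w ≠ []} \ L₀)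

/-! ### Counter-free DFAs -/

/-- The `n`-fold concatenation `w^n` of a word `w`. -/
def wpow {A : Type} (w : List A) (n : ℕ) : List A := (List.replicate n w).flatten

/-- A DFA is counter-free if no transition function `δ_w`, `w ∈ A⁺`, has a
non-trivial cycle. -/
def IsCounterFree {A σ : Type} (M : DFA A σ) : Prop :=
  ¬ ∃ (q : σ) (w : List A) (n : ℕ), w ≠ [] ∧ 1 < n ∧
      M.evalFrom q w ≠ q ∧ M.evalFrom q (wpow w n) = q

/-! ### Finite aperiodic semigroups -/

/-- A bundled finite semigroup. -/
structure FinSemigroup where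
  carrier : Type
  [str : Semigroup carrier]
  [fin : Finite carrier]

attribute [instance] FinSemigroup.str FinSemigroup.fin

/-- `spow s n = s^(n+1)`: powers (with positive exponents) in a semigroup. -/
def spow {S : Type} [Semigroup S] (s : S) : ℕ → S
  | 0 => s
  | n + 1 => spow s n * s

/-- A semigroup is aperiodic if `s^n = s^(n+1)` for some `n ≥ 1` and all `s`. -/
def IsAperiodic (S : Type) [Semigroup S] : Prop :=
  ∃ n : ℕ, ∀ s : S, spow s n = spow s (n + 1)

/-- `h : A⁺ → S` is a semigroup homomorphism from the free semigroup `A⁺` of nonempty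
words under concatenation. -/
def IsWordHom {A S : Type} [Semigroup S] (h : List A → S) : Prop :=
  ∀ u v : List A, u ≠ [] → v ≠ [] → h (u ++ v) = h u * h v

/-- Recognition of a language by a semigroup homomorphism. -/
def RecognisedBy {A S : Type} [Semigroup S] (h : List A → S) (F : Set S)
    (L : Set (List A)) : Prop :=
  IsWordHom h ∧ L = {w : List A | w ≠ [] ∧ h w ∈ F}

/-! ### FO(<)-definability -/

/-- Relation symbols of the word signature `σ_A`: a unary predicate for each letter
`a ∈ A` and the binary predicate `<`. -/
def WordRel (A : Type) : ℕ → Type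
  | 1 => A
  | 2 => Unit
  | _ => Empty

/-- The first-order signature `σ_A` of words over `A`. -/
def wordLang (A : Type) : FirstOrder.Language := ⟨fun _ => Empty, WordRel A⟩

/-- A word regarded as a first-order `σ_A`-structure on its set of positions. -/
def wordStructure {A : Type} (w : List A) : (wordLang A).Structure (Fin w.length) where
  funMap := fun f _ => Empty.elim f
  RelMap := fun {n} r =>
    match n, r with
    | 1, a => fun v => w.get (v 0) = a
    | 2, _ => fun v => v 0 < v 1

/-- Truth of a `σ_A`-sentence in a word. -/
def SatWord {A : Type} (w : List A) (θ : (wordLang A).Sentence) : Prop :=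
  letI := wordStructure w
  (Fin w.length) ⊨ θ

/-- A language `L ⊆ A⁺` is FO(<)-definable if it is the set of nonempty words
satisfying some `σ_A`-sentence. -/
def FODefinable {A : Type} (L : Set (List A)) : Prop :=
  ∃ θ : (wordLang A).Sentence, L = {w : List A | w ≠ [] ∧ SatWord w θ}

namespace SMP

/-! ### Star-free languages with the empty word -/

inductive SF {A : Type} : Set (List A) → Prop
  | empty : SF ∅
  | eps : SF {[]}
  | single (a : A) : SF {[a]}
  | concat {L₁ L₂ : Set (List A)} : SF L₁ → SF L₂ →
      SF {w | ∃ u ∈ L₁, ∃ v ∈ L₂, w = u ++ v}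
  | union {L₁ L₂ : Set (List A)} : SF L₁ → SF L₂ → SF (L₁ ∪ L₂)
  | compl {L₀ : Set (List A)} : SF L₀ → SF L₀ᶜ

theorem starFree_empty {A : Type} : StarFree (∅ : Set (List A)) := by
  have := StarFree.compl (StarFree.all (A := A))
  simpa using this

theorem SF.toStarFree {A : Type} {L : Set (List A)} (h : SF L) :
    StarFree {w | w ≠ [] ∧ w ∈ L} := by
  classical
  induction h with
  | empty => simpa using starFree_empty
  | eps =>
    have : {w : List A | w ≠ [] ∧ w ∈ ({[]} : Set (List A))} = ∅ := by
      ext w; simp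
    rw [this]; exact starFree_empty
  | single a =>
    have : {w : List A | w ≠ [] ∧ w ∈ ({[a]} : Set (List A))} = {[a]} := by
      ext w; simp; rintro rfl; simp
    rw [this]; exact StarFree.single a
  | @concat L₁ L₂ _ _ h1 h2 =>
    have e1 : StarFree (if [] ∈ L₁ then {w | w ≠ [] ∧ w ∈ L₂} else ∅) := by
      split_ifs
      · exact h2
      · exact starFree_empty
    have e2 : StarFree (if [] ∈ L₂ then {w | w ≠ [] ∧ w ∈ L₁} else ∅) := by
      split_ifs
      · exact h1
      · exact starFree_empty
    have e := ((h1.concat h2).union e1).union e2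
    convert e using 1
    ext w
    simp only [Set.mem_ofPred_eq, Set.mem_union]
    constructor
    · rintro ⟨hw, u, hu, v, hv, rfl⟩
      rcases u with _ | ⟨a, u⟩
      · left; right
        rw [if_pos hu]
        simpa using ⟨by simpa using hw, hv⟩
      · rcases v with _ | ⟨b, v⟩
        · right
          rw [if_pos hv]
          simpa using hu
        · left; left
          exact ⟨_, ⟨by simp, hu⟩, _, ⟨by simp, hv⟩, rfl⟩
    · rintro ((⟨u, ⟨hu0, hu⟩, v, ⟨_, hv⟩, rfl⟩ | h) | h)
      · exact ⟨by simp [hu0], u, hu, v, hv, rfl⟩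
      · split_ifs at h with h0
        · exact ⟨h.1, [], h0, w, h.2, rfl⟩
        · exact h.elim
      · split_ifs at h with h0
        · exact ⟨h.1, w, h.2, [], h0, by simp⟩
        · exact h.elim
  | union _ _ h1 h2 =>
    convert h1.union h2 using 1
    ext w; simp; tauto
  | compl _ h1 =>
    convert h1.compl using 1
    ext w; simp; tauto

theorem SF.univ {A : Type} : SF (Set.univ : Set (List A)) := by
  simpa using (SF.empty (A := A)).compl

theorem SF.inter {A : Type} {L₁ L₂ : Set (List A)} (h1 : SF L₁) (h2 : SF L₂) : SF (L₁ ∩ L₂) := by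
  have := (h1.compl.union h2.compl).compl
  simpa [Set.compl_union] using this

theorem SF.iUnion {A ι : Type} [Finite ι] {L : ι → Set (List A)} (h : ∀ i, SF (L i)) :
    SF (⋃ i, L i) := by
  classical
  have := Fintype.ofFinite ι
  have key : ∀ s : Finset ι, SF (⋃ i ∈ s, L i) := by
    intro s
    induction s using Finset.induction_on with
    | empty => simpa using SF.empty
    | insert a s _ ih =>
      rw [Finset.set_biUnion_insert]
      exact (h a).union ih
  simpa using key Finset.univ

/-- Words over `B` with value `p`. -/
def lang {A M : Type} [Monoid M] (f : A → M) (B : Finset A) (p : M) : Set (List A) :=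
  {w | (∀ a ∈ w, a ∈ B) ∧ (w.map f).prod = p}

theorem SF.star {A : Type} [Finite A] (B : Finset A) : SF {w : List A | ∀ a ∈ w, a ∈ B} := by
  have h : SF (⋃ a : {a : A // a ∉ B},
      {w : List A | ∃ u ∈ Set.univ, ∃ v ∈ {w : List A | ∃ u ∈ ({[a.1]} : Set (List A)),
        ∃ v ∈ Set.univ, w = u ++ v}, w = u ++ v}) :=
    SF.iUnion fun a => SF.univ.concat ((SF.single a.1).concat SF.univ)
  convert h.compl using 1
  ext w
  simp only [Set.mem_ofPred_eq, Set.mem_compl_iff, Set.mem_iUnion]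
  constructor
  · rintro hw ⟨⟨a, ha⟩, u, _, v, ⟨s, hs, t, _, rfl⟩, rfl⟩
    obtain rfl := hs
    exact ha (hw a (by simp))
  · intro hw a ha
    by_contra hB
    obtain ⟨s, t, rfl⟩ := List.append_of_mem ha
    exact hw ⟨⟨a, hB⟩, s, trivial, a :: t, ⟨[a], rfl, t, trivial, rfl⟩, rfl⟩

/-! ### Local divisors -/

def LD {M : Type} [Monoid M] (c : M) : Type := {x : M // (∃ u, x = u * c) ∧ ∃ v, x = c * v}

namespace LD
variable {M : Type} [Monoid M] {c : M}

noncomputable def lft (x : LD c) : M := x.2.1.choose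

theorem lft_spec (x : LD c) : x.1 = lft x * c := x.2.1.choose_spec

theorem lft_mul {x : LD c} {u : M} (h : x.1 = u * c) (y : LD c) : lft x * y.1 = u * y.1 := by
  obtain ⟨v, hv⟩ := y.2.2
  rw [hv, ← mul_assoc, ← mul_assoc, ← lft_spec, h]

noncomputable instance : Mul (LD c) := ⟨fun x y => ⟨lft x * y.1, by
  refine ⟨⟨lft x * lft y, ?_⟩, ?_⟩
  · rw [mul_assoc, ← lft_spec]
  · obtain ⟨v, hv⟩ := y.2.2
    obtain ⟨v', hv'⟩ := x.2.2
    exact ⟨v' * v, by rw [hv, ← mul_assoc, ← lft_spec, hv', mul_assoc]⟩⟩⟩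

instance : One (LD c) := ⟨⟨c, ⟨1, by simp⟩, ⟨1, by simp⟩⟩⟩

theorem mul_val (x y : LD c) : (x * y).1 = lft x * y.1 := rfl
theorem one_val : (1 : LD c).1 = c := rfl

theorem mul_val' {x : LD c} {u : M} (h : x.1 = u * c) (y : LD c) : (x * y).1 = u * y.1 :=
  lft_mul h y

noncomputable instance : Monoid (LD c) where
  mul_assoc x y z := by
    apply Subtype.ext
    have h : (x * y).1 = (lft x * lft y) * c := by
      rw [mul_val, mul_assoc, ← lft_spec]
    rw [mul_val' h, mul_val, mul_val, mul_assoc]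
  one_mul x := by
    apply Subtype.ext
    rw [mul_val' (u := 1) (by simp [one_val]), one_mul]
  mul_one x := by
    apply Subtype.ext
    rw [mul_val, one_val, ← lft_spec]

theorem pow_val {x : LD c} {u : M} (h : x.1 = u * c) (n : ℕ) : (x ^ n).1 = u ^ n * c := by
  induction n with
  | zero => simp [one_val]
  | succ n ih => rw [pow_succ', mul_val' h, ih, pow_succ', mul_assoc]

/-- The image of a letter. -/
def emb (c t : M) : LD c := ⟨c * t * c, ⟨c * t, rfl⟩, ⟨t * c, mul_assoc _ _ _⟩⟩

theorem prod_val (k : List M) :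
    ((k.map (emb c)).prod).1 = (k.map (c * ·)).prod * c := by
  induction k with
  | nil => simp [one_val]
  | cons t k ih =>
    rw [List.map_cons, List.prod_cons, mul_val' (u := c * t) rfl, ih]
    simp [mul_assoc]

end LD

/-! ### The block decomposition -/

section Blocks
open Classical
variable {A M : Type} [Monoid M] (f : A → M) (c : A)

noncomputable def g : List A → M × List M
  | [] => (1, [])
  | a :: w => if a = c then (1, (g w).1 :: (g w).2) else (f a * (g w).1, (g w).2)

@[simp] theorem g_nil : g f c [] = (1, []) := rfl
@[simp] theorem g_cons_self (w : List A) : g f c (c :: w) = (1, (g f c w).1 :: (g f c w).2) := by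
  simp [g]
theorem g_cons_ne {a : A} (h : a ≠ c) (w : List A) :
    g f c (a :: w) = (f a * (g f c w).1, (g f c w).2) := by
  simp [g, h]

theorem g_append (w₁ w₂ : List A) (h : (g f c w₂).1 = 1) :
    g f c (w₁ ++ w₂) = ((g f c w₁).1, (g f c w₁).2 ++ (g f c w₂).2) := by
  induction w₁ with
  | nil => simp [← h]
  | cons a w ih =>
    by_cases ha : a = c
    · subst ha; simp [ih]
    · simp [g_cons_ne f c ha, ih]

theorem g_prod (w : List A) :
    (w.map f).prod = (g f c w).1 * ((g f c w).2.map (f c * ·)).prod := by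
  induction w with
  | nil => simp
  | cons a w ih =>
    by_cases ha : a = c
    · subst ha; simp [ih, mul_assoc]
    · simp [g_cons_ne f c ha, ih, mul_assoc]

theorem g_of_not_mem (w : List A) (h : c ∉ w) : g f c w = ((w.map f).prod, []) := by
  induction w with
  | nil => simp
  | cons a w ih =>
    simp only [List.mem_cons, not_or] at h
    rw [g_cons_ne f c (Ne.symm h.1), ih h.2]; simp

theorem not_mem_of_g (w : List A) (h : (g f c w).2 = []) : c ∉ w := by
  induction w with
  | nil => simp
  | cons a w ih =>
    by_cases ha : a = c
    · subst ha; simp at h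
    · rw [g_cons_ne f c ha] at h
      simp [Ne.symm ha, ih h]

def Start (w : List A) : Prop := w = [] ∨ ∃ v, w = c :: v

theorem Start.g_one {w : List A} (h : Start c w) : (g f c w).1 = 1 := by
  rcases h with rfl | ⟨v, rfl⟩ <;> simp

theorem g_split (w : List A) (k₁ k₂ : List M) (h : (g f c w).2 = k₁ ++ k₂) :
    ∃ w₁ w₂, w = w₁ ++ w₂ ∧ Start c w₂ ∧ (g f c w₁).2 = k₁ ∧ (g f c w₂).2 = k₂ := by
  induction w generalizing k₁ with
  | nil =>
    simp only [g_nil, List.nil_eq, List.append_eq_nil_iff] at h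
    exact ⟨[], [], rfl, Or.inl rfl, by simp [h.1], by simp [h.2]⟩
  | cons a w ih =>
    by_cases ha : a = c
    · subst ha
      rcases k₁ with _ | ⟨m, k₁⟩
      · exact ⟨[], a :: w, rfl, Or.inr ⟨w, rfl⟩, by simp, by simpa using h⟩
      · simp only [g_cons_self, List.cons_append, List.cons.injEq] at h
        obtain ⟨w₁, w₂, rfl, hs, h1, h2⟩ := ih k₁ h.2
        refine ⟨a :: w₁, w₂, rfl, hs, ?_, h2⟩
        rw [g_append f a w₁ w₂ (hs.g_one f a)] at h
        simp [h1, ← h.1]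
    · rw [g_cons_ne f c ha] at h
      obtain ⟨w₁, w₂, rfl, hs, h1, h2⟩ := ih k₁ h
      exact ⟨a :: w₁, w₂, rfl, hs, by rw [g_cons_ne f c ha]; exact h1, h2⟩

theorem Start.of_append {w₁ w₂ : List A} (h : Start c (w₁ ++ w₂)) : Start c w₁ := by
  rcases w₁ with _ | ⟨a, w₁⟩
  · exact Or.inl rfl
  · rcases h with h | ⟨v, h⟩
    · simp at h
    · simp at h
      exact Or.inr ⟨w₁, by rw [h.1]⟩

theorem Start.append {w₁ w₂ : List A} (h : Start c w₁) (h' : Start c w₂) : Start c (w₁ ++ w₂) := by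
  rcases h with rfl | ⟨v, rfl⟩
  · simpa using h'
  · exact Or.inr ⟨v ++ w₂, rfl⟩

/-- Inverse image of `K` under the block map. -/
def Sub (B : Finset A) (K : Set (List M)) : Set (List A) :=
  {w | (∀ a ∈ w, a ∈ B) ∧ Start c w ∧ (g f c w).2 ∈ K}

theorem sub_sf [Finite A] (B : Finset A) (hc : c ∈ B) (hB : ∀ t : M, SF (lang f (B.erase c) t))
    {K : Set (List M)} (hK : SF K) : SF (Sub f c B K) := by
  induction hK with
  | empty =>
    have : Sub f c B ∅ = ∅ := by ext; simp [Sub]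
    rw [this]; exact SF.empty
  | eps =>
    have : Sub f c B {[]} = {[]} := by
      ext w
      simp only [Sub, Set.mem_ofPred_eq, Set.mem_singleton_iff]
      constructor
      · rintro ⟨_, rfl | ⟨v, rfl⟩, h⟩
        · rfl
        · simp at h
      · rintro rfl; simp [Start]
    rw [this]; exact SF.eps
  | single t =>
    have : Sub f c B {[t]} =
        {w | ∃ u ∈ ({[c]} : Set (List A)), ∃ v ∈ lang f (B.erase c) t, w = u ++ v} := by
      ext w
      simp only [Sub, lang, Set.mem_ofPred_eq, Set.mem_singleton_iff]
      constructor
      · rintro ⟨hw, rfl | ⟨v, rfl⟩, h⟩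
        · simp at h
        · simp only [g_cons_self, List.cons.injEq] at h
          have hn := not_mem_of_g f c v h.2
          refine ⟨[c], rfl, v, ⟨fun a ha => ?_, ?_⟩, rfl⟩
          · simp only [Finset.mem_erase]
            exact ⟨fun e => hn (e ▸ ha), hw a (by simp [ha])⟩
          · rw [g_of_not_mem f c v hn] at h; exact h.1
      · rintro ⟨_, rfl, v, ⟨hv, hp⟩, rfl⟩
        have hn : c ∉ v := fun h => by simpa using hv c h
        refine ⟨?_, Or.inr ⟨v, rfl⟩, ?_⟩
        · intro a ha
          simp only [List.singleton_append, List.mem_cons] at ha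
          rcases ha with rfl | ha
          · exact hc
          · exact Finset.mem_of_mem_erase (hv a ha)
        · simp [g_of_not_mem f c v hn, hp]
    rw [this]; exact (SF.single c).concat (hB t)
  | @concat K₁ K₂ _ _ h1 h2 =>
    convert h1.concat h2 using 1
    ext w
    simp only [Sub, Set.mem_ofPred_eq]
    constructor
    · rintro ⟨hw, hs, k₁, hk₁, k₂, hk₂, h⟩
      obtain ⟨w₁, w₂, rfl, hs2, e1, e2⟩ := g_split f c w k₁ k₂ h
      exact ⟨w₁, ⟨fun a ha => hw a (by simp [ha]), hs.of_append, e1 ▸ hk₁⟩,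
        w₂, ⟨fun a ha => hw a (by simp [ha]), hs2, e2 ▸ hk₂⟩, rfl⟩
    · rintro ⟨w₁, ⟨hw1, hs1, hk1⟩, w₂, ⟨hw2, hs2, hk2⟩, rfl⟩
      refine ⟨?_, hs1.append c hs2, _, hk1, _, hk2, ?_⟩
      · intro a ha
        rcases List.mem_append.1 ha with h | h
        · exact hw1 a h
        · exact hw2 a h
      · rw [g_append f c w₁ w₂ (hs2.g_one f c)]
  | union _ _ h1 h2 =>
    convert h1.union h2 using 1
    ext w; simp [Sub]; tauto
  | @compl K _ h1 =>
    have hC : SF ({[]} ∪ {w | ∃ u ∈ ({[c]} : Set (List A)),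
        ∃ v ∈ {w : List A | ∀ a ∈ w, a ∈ B}, w = u ++ v}) :=
      SF.eps.union ((SF.single c).concat (SF.star B))
    convert hC.inter h1.compl using 1
    ext w
    simp only [Sub, Set.mem_ofPred_eq, Set.mem_inter_iff, Set.mem_compl_iff, Set.mem_union,
      Set.mem_singleton_iff, Start]
    constructor
    · rintro ⟨hw, hs, hk⟩
      refine ⟨?_, fun h => hk h.2.2⟩
      rcases hs with rfl | ⟨v, rfl⟩
      · left; rfl
      · right; exact ⟨[c], rfl, v, fun a ha => hw a (by simp [ha]), rfl⟩
    · rintro ⟨rfl | ⟨_, rfl, v, hv, rfl⟩, h⟩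
      · exact ⟨by simp, Or.inl rfl, fun hk => h ⟨by simp, Or.inl rfl, hk⟩⟩
      · have hm : ∀ a ∈ [c] ++ v, a ∈ B := by
          intro a ha
          simp only [List.singleton_append, List.mem_cons] at ha
          rcases ha with rfl | ha
          · exact hc
          · exact hv a ha
        exact ⟨hm, Or.inr ⟨v, rfl⟩, fun hk => h ⟨hm, Or.inr ⟨v, rfl⟩, hk⟩⟩

theorem split_last (w : List A) (h : c ∈ w) : ∃ y v, w = y ++ c :: v ∧ c ∉ v := by
  induction w with
  | nil => simp at h
  | cons a w ih =>
    by_cases hw : c ∈ w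
    · obtain ⟨y, v, rfl, hv⟩ := ih hw
      exact ⟨a :: y, v, rfl, hv⟩
    · have : c = a := by simpa [hw] using h
      subst this
      exact ⟨[], w, rfl, hw⟩

theorem split_first (w : List A) : ∃ u x, w = u ++ x ∧ c ∉ u ∧ Start c x := by
  induction w with
  | nil => exact ⟨[], [], rfl, by simp, Or.inl rfl⟩
  | cons a w ih =>
    by_cases ha : a = c
    · subst ha; exact ⟨[], a :: w, rfl, by simp, Or.inr ⟨w, rfl⟩⟩
    · obtain ⟨u, x, rfl, hu, hx⟩ := ih
      exact ⟨a :: u, x, rfl, by simp [hu, Ne.symm ha], hx⟩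

end Blocks

def Aperiodic (M : Type) [Monoid M] : Prop := ∀ x : M, ∃ n : ℕ, x ^ n = x ^ (n + 1)

theorem Aperiodic.eq_one {M : Type} [Monoid M] (h : Aperiodic M) {c y : M} (e : c * y = 1) :
    c = 1 := by
  obtain ⟨n, hn⟩ := h c
  have key : ∀ n, c ^ n * y ^ n = 1 := by
    intro n
    induction n with
    | zero => simp
    | succ n ih => rw [pow_succ, pow_succ', mul_assoc, ← mul_assoc c, e, one_mul, ih]
  have := key n
  rw [hn, pow_succ', mul_assoc, key n, mul_one] at this
  exact this

theorem Aperiodic.ld {M : Type} [Monoid M] (h : Aperiodic M) (c : M) : Aperiodic (LD c) := by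
  intro x
  obtain ⟨n, hn⟩ := h (LD.lft x)
  refine ⟨n, Subtype.ext ?_⟩
  rw [LD.pow_val (LD.lft_spec x), LD.pow_val (LD.lft_spec x), hn]

theorem main_sf (n : ℕ) : ∀ (M : Type) [Monoid M] [Finite M], Aperiodic M → Nat.card M = n →
    ∀ (A : Type) [Finite A] (f : A → M) (B : Finset A) (p : M), SF (lang f B p) := by
  classical
  induction n using Nat.strong_induction_on with
  | _ n IH =>
  intro M _ _ hM hcard A _ f B
  induction B using Finset.strongInduction with
  | _ B IHB =>
  intro p
  by_cases hall : ∀ b ∈ B, f b = 1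
  · have hone : ∀ w : List A, (∀ a ∈ w, a ∈ B) → (w.map f).prod = 1 := by
      intro w hw
      apply List.prod_eq_one
      intro x hx
      obtain ⟨a, ha, rfl⟩ := List.mem_map.1 hx
      exact hall a (hw a ha)
    by_cases hp : p = 1
    · convert SF.star B using 1
      ext w
      simp only [lang, Set.mem_ofPred_eq, hp]
      exact ⟨fun h => h.1, fun h => ⟨h, hone w h⟩⟩
    · convert SF.empty (A := A) using 1
      ext w
      simp only [lang, Set.mem_ofPred_eq, Set.mem_empty_iff_false, iff_false, not_and]
      intro h e
      exact hp (e ▸ hone w h)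
  push Not at hall
  obtain ⟨c, hc, hc1⟩ := hall
  have hB := IHB (B.erase c) (Finset.erase_ssubset hc)
  have hfin : Finite (LD (f c)) := inferInstanceAs (Finite {x : M // _})
  have hlt : Nat.card (LD (f c)) < n := by
    rw [← hcard]
    apply Finite.card_subtype_lt (x := (1 : M))
    rintro ⟨_, v, hv⟩
    exact hc1 (hM.eq_one hv.symm)
  have hX : ∀ q : LD (f c), SF (Sub f c B {k | (k.map (LD.emb (f c))).prod = q}) := by
    intro q
    apply sub_sf f c B hc hB
    have := Fintype.ofFinite M
    have := IH _ hlt (LD (f c)) (hM.ld (f c)) rfl M (LD.emb (f c)) Finset.univ q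
    simpa [lang] using this
  have hU := SF.iUnion (ι := {t : M × LD (f c) × M // t.1 * t.2.1.1 * t.2.2 = p}) fun t =>
    (hB t.1.1).concat ((hX t.1.2.1).concat ((SF.single c).concat (hB t.1.2.2)))
  convert (hB p).union hU using 1
  ext w
  simp only [Set.mem_union, Set.mem_iUnion]
  constructor
  · rintro ⟨hw, hp⟩
    by_cases hcw : c ∈ w
    · right
      obtain ⟨y, v, rfl, hv⟩ := split_last c w hcw
      obtain ⟨u, x, rfl, hu, hx⟩ := split_first c y
      refine ⟨⟨((u.map f).prod, (((g f c x).2.map (LD.emb (f c))).prod, (v.map f).prod)), ?_⟩,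
        u, ⟨?_, rfl⟩, x ++ c :: v, ⟨x, ⟨?_, hx, rfl⟩, c :: v, ⟨[c], rfl, v, ⟨?_, rfl⟩, rfl⟩, rfl⟩,
          by simp⟩
      · simp only [LD.prod_val]
        rw [← hp]
        simp only [List.map_append, List.map_cons, List.prod_append, List.prod_cons]
        rw [g_prod f c x, hx.g_one f c]
        simp [mul_assoc]
      · intro a ha
        exact Finset.mem_erase.2 ⟨fun e => hu (e ▸ ha), hw a (by simp [ha])⟩
      · intro a ha
        exact hw a (by simp [ha])
      · intro a ha
        exact Finset.mem_erase.2 ⟨fun e => hv (e ▸ ha), hw a (by simp [ha])⟩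
    · left
      exact ⟨fun a ha => Finset.mem_erase.2 ⟨fun e => hcw (e ▸ ha), hw a ha⟩, hp⟩
  · rintro (⟨hw, hp⟩ | ⟨⟨⟨p1, q, p3⟩, ht⟩, u, ⟨hu, hu1⟩, _, ⟨x, ⟨hx, hs, hxq⟩, _,
      ⟨_, rfl, v, ⟨hv, hv1⟩, rfl⟩, rfl⟩, rfl⟩)
    · exact ⟨fun a ha => Finset.mem_of_mem_erase (hw a ha), hp⟩
    · refine ⟨?_, ?_⟩
      · intro a ha
        simp only [List.mem_append, List.mem_singleton] at ha
        rcases ha with ha | ha | rfl | ha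
        · exact Finset.mem_of_mem_erase (hu a ha)
        · exact hx a ha
        · exact hc
        · exact Finset.mem_of_mem_erase (hv a ha)
      · simp only at hu1 hv1 ht hxq
        rw [← ht, ← hu1, ← hv1, ← (show _ = q from hxq), LD.prod_val]
        simp only [List.map_append, List.prod_append]
        rw [g_prod f c x, hs.g_one f c]
        simp [mul_assoc]

end SMP
namespace SMP

/-! ### From semigroups to star-free languages -/

theorem starFree_of_semigroup {A S : Type} [Finite A] [Semigroup S] [Finite S]
    (hS : IsAperiodic S) (h : List A → S) (F : Set S) (L : Set (List A))
    (hL : RecognisedBy h F L) : StarFree L := by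
  classical
  have := Fintype.ofFinite A
  obtain ⟨hh, rfl⟩ := hL
  have hpow : ∀ (s : S) (n : ℕ), ((spow s n : S) : WithOne S) = (s : WithOne S) ^ (n + 1) := by
    intro s n
    induction n with
    | zero => simp [spow]
    | succ n ih => rw [pow_succ, ← ih, spow, WithOne.coe_mul]
  have hM : Aperiodic (WithOne S) := by
    obtain ⟨n, hn⟩ := hS
    intro x
    refine WithOne.cases_on x ⟨0, by simp⟩ fun s => ⟨n + 1, by rw [← hpow, ← hpow, hn]⟩
  have : Finite (WithOne S) := inferInstanceAs (Finite (Option S))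
  let f : A → WithOne S := fun a => (h [a] : S)
  have hval : ∀ w : List A, w ≠ [] → (w.map f).prod = (h w : WithOne S) := by
    intro w
    induction w with
    | nil => simp
    | cons a w ih =>
      intro _
      by_cases hw : w = []
      · subst hw; simp [f]
      · have : a :: w = [a] ++ w := rfl
        rw [this, hh [a] w (by simp) hw]
        simp [f, ih hw]
  have key := SF.iUnion (ι := F) fun p =>
    main_sf _ (WithOne S) hM rfl A f Finset.univ ((p : S) : WithOne S)
  convert key.toStarFree using 1
  ext w
  simp only [lang, Set.mem_ofPred_eq, Set.mem_iUnion]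
  constructor
  · rintro ⟨hw, hF⟩
    exact ⟨hw, ⟨h w, hF⟩, by simp, hval w hw⟩
  · rintro ⟨hw, ⟨p, hp⟩, _, e⟩
    rw [hval w hw] at e
    refine ⟨hw, ?_⟩
    rw [WithOne.coe_inj.1 e]; exact hp

/-! ### From counter-free automata to semigroups -/

theorem wpow_zero {A : Type} (w : List A) : wpow w 0 = [] := rfl
theorem wpow_succ {A : Type} (w : List A) (n : ℕ) : wpow w (n + 1) = w ++ wpow w n := by
  simp [wpow, List.replicate_succ]
theorem wpow_add {A : Type} (w : List A) (m n : ℕ) : wpow w (m + n) = wpow w m ++ wpow w n := by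
  rw [wpow, List.replicate_add, List.flatten_append]; rfl
theorem wpow_mul {A : Type} (w : List A) (m n : ℕ) : wpow w (m * n) = wpow (wpow w m) n := by
  induction n with
  | zero => simp [wpow_zero]
  | succ n ih => rw [wpow_succ, ← ih, ← wpow_add]; congr 1; ring

/-- The transition semigroup. -/
def TS {A σ : Type} (M : DFA A σ) : Type := {t : σ → σ // ∃ w, ∀ q, t q = M.evalFrom q w}

instance {A σ : Type} (M : DFA A σ) : Semigroup (TS M) where
  mul s t := ⟨fun q => t.1 (s.1 q), by
    obtain ⟨u, hu⟩ := s.2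
    obtain ⟨v, hv⟩ := t.2
    exact ⟨u ++ v, fun q => by
      rw [DFA.evalFrom_of_append, ← hu, ← hv]⟩⟩
  mul_assoc _ _ _ := rfl

theorem TS.mul_val {A σ : Type} {M : DFA A σ} (s t : TS M) (q : σ) : (s * t).1 q = t.1 (s.1 q) := rfl

theorem semigroup_of_dfa {A σ : Type} [Fintype σ] (M : DFA A σ) (hM : IsCounterFree M)
    (L : Set (List A)) (hne : [] ∉ L) (hL : M.accepts = L) :
    ∃ (S : FinSemigroup) (h : List A → S.carrier) (F : Set S.carrier),
          IsAperiodic S.carrier ∧ RecognisedBy h F L := by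
  have hfin : Finite (TS M) := inferInstanceAs (Finite {t : σ → σ // _})
  refine ⟨⟨TS M⟩, fun w => ⟨fun q => M.evalFrom q w, w, fun _ => rfl⟩,
    {t | t.1 M.start ∈ M.accept}, ?_, ?_, ?_⟩
  · have hpow : ∀ (s : TS M) (n : ℕ) (q : σ), (spow s n).1 q = s.1^[n + 1] q := by
      intro s n q
      induction n with
      | zero => simp [spow]
      | succ n ih => rw [spow, TS.mul_val, ih, Function.iterate_succ_apply' s.1 (n + 1)]
    refine ⟨Fintype.card σ, fun s => Subtype.ext (funext fun q => ?_)⟩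
    rw [hpow, hpow]
    obtain ⟨w, hw⟩ := s.2
    have hit : ∀ n q, s.1^[n] q = M.evalFrom q (wpow w n) := by
      intro n
      induction n with
      | zero => intro q; simp [wpow_zero]
      | succ n ih =>
        intro q
        rw [Function.iterate_succ_apply, ih, wpow_succ, DFA.evalFrom_of_append, hw]
    have hfix : ∃ i ≤ Fintype.card σ, s.1 (s.1^[i] q) = s.1^[i] q := by
      obtain ⟨i, j, hij, he⟩ := Fintype.exists_ne_map_eq_of_card_lt
        (fun i : Fin (Fintype.card σ + 1) => s.1^[i.1] q) (by simp)
      have aux : ∀ i j : ℕ, i < j → j ≤ Fintype.card σ → s.1^[i] q = s.1^[j] q →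
          ∃ i ≤ Fintype.card σ, s.1 (s.1^[i] q) = s.1^[i] q := by
        intro i j hij hj he
        refine ⟨i, by omega, ?_⟩
        by_contra hc
        obtain ⟨d, rfl⟩ := Nat.exists_eq_add_of_lt hij
        rw [add_assoc, add_comm i, Function.iterate_add_apply] at he
        have hw0 : w ≠ [] := by
          rintro rfl
          apply hc; rw [hw]; simp
        rcases d with _ | d
        · simp at he
          exact hc he.symm
        · refine hM ⟨s.1^[i] q, w, d + 1 + 1, hw0, by omega, ?_, ?_⟩
          · rw [← hw]; exact hc
          · rw [← hit]; exact he.symm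
      have hi := i.2
      have hj := j.2
      rcases lt_or_gt_of_ne (fun h => hij (Fin.ext h) : i.1 ≠ j.1) with h | h
      · exact aux _ _ h (by omega) he
      · exact aux _ _ h (by omega) he.symm
    obtain ⟨i, hi, hfix⟩ := hfix
    obtain ⟨d, hd⟩ := Nat.exists_eq_add_of_le hi
    have hf : ∀ d, s.1^[d] (s.1^[i] q) = s.1^[i] q := fun d => Function.iterate_fixed hfix d
    rw [show Fintype.card σ + 1 + 1 = (d + 2) + i by omega,
      show Fintype.card σ + 1 = (d + 1) + i by omega,
      Function.iterate_add_apply _ (d + 1), Function.iterate_add_apply _ (d + 2), hf, hf]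
  · intro u v _ _
    apply Subtype.ext
    funext q
    exact DFA.evalFrom_of_append M q u v
  · ext w
    constructor
    · intro h
      refine ⟨fun e => hne (e ▸ h), ?_⟩
      rw [← hL] at h
      exact h
    · rintro ⟨_, h⟩
      rw [← hL]
      exact h

/-! ### From aperiodic regular languages to counter-free automata -/

def Aper {A : Type} (L : Set (List A)) : Prop :=
  ∃ N : ℕ, ∀ n, N ≤ n → ∀ x u y : List A, x ++ wpow u n ++ y ∈ L ↔ x ++ wpow u (n + 1) ++ y ∈ L

theorem dfa_of_aper {A : Type} (L : Set (List A)) (hreg : Language.IsRegular (L : Language A))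
    (hL : Aper L) :
    ∃ (σ : Type) (_ : Fintype σ) (M : DFA A σ), IsCounterFree M ∧ M.accepts = L := by
  have hfin := hreg.finite_range_leftQuotient
  have := hfin.fintype
  let L' : Language A := L
  refine ⟨Set.range L'.leftQuotient, this, L'.toDFA, ?_, L'.accepts_toDFA⟩
  rintro ⟨⟨_, x, rfl⟩, w, n, hw, hn, hne, he⟩
  have hev : ∀ (u x : List A), ((L'.toDFA.evalFrom ⟨L'.leftQuotient x, x, rfl⟩ u).1 : Language A)
      = L'.leftQuotient (x ++ u) := by
    intro u
    induction u with
    | nil => intro x; simp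
    | cons a u ih =>
      intro x
      have : L'.toDFA.step ⟨L'.leftQuotient x, x, rfl⟩ a = ⟨L'.leftQuotient (x ++ [a]), x ++ [a], rfl⟩ :=
        Subtype.ext (by simp [Language.leftQuotient_append])
      rw [DFA.evalFrom_cons, this, ih]; simp
  apply hne
  apply Subtype.ext
  rw [hev]
  replace he := congrArg Subtype.val he
  rw [hev] at he
  have hk : ∀ k, L'.leftQuotient (x ++ wpow (wpow w n) k) = L'.leftQuotient x := by
    intro k
    induction k with
    | zero => simp [wpow_zero]
    | succ k ih =>
      rw [wpow_succ, ← List.append_assoc, Language.leftQuotient_append, he,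
        ← Language.leftQuotient_append, ih]
  obtain ⟨N, hN⟩ := hL
  have h1 := hk N
  rw [← wpow_mul] at h1
  have h2 : L'.leftQuotient (x ++ wpow w (n * N + 1)) = L'.leftQuotient (x ++ wpow w (n * N)) := by
    ext y
    exact (hN (n * N) (Nat.le_mul_of_pos_left N (by omega)) x w y).symm
  rw [wpow_add, ← List.append_assoc, Language.leftQuotient_append, h1,
    ← Language.leftQuotient_append] at h2
  simpa [wpow_succ, wpow_zero] using h2

end SMP
namespace SMP

/-! ### Games on words -/

def E {B : Type} : ℕ → List B → List B → Prop
  | 0, _, _ => True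
  | k + 1, u, v =>
    (∀ u₁ b u₂, u = u₁ ++ b :: u₂ → ∃ v₁ v₂, v = v₁ ++ b :: v₂ ∧ E k u₁ v₁ ∧ E k u₂ v₂) ∧
    (∀ v₁ b v₂, v = v₁ ++ b :: v₂ → ∃ u₁ u₂, u = u₁ ++ b :: u₂ ∧ E k u₁ v₁ ∧ E k u₂ v₂)

theorem E_refl {B : Type} (k : ℕ) (u : List B) : E k u u := by
  induction k generalizing u with
  | zero => trivial
  | succ k ih =>
    exact ⟨fun u₁ b u₂ h => ⟨u₁, u₂, h, ih _, ih _⟩, fun u₁ b u₂ h => ⟨u₁, u₂, h, ih _, ih _⟩⟩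

theorem E_symm {B : Type} {k : ℕ} {u v : List B} (h : E k u v) : E k v u := by
  induction k generalizing u v with
  | zero => trivial
  | succ k ih =>
    constructor
    · intro u₁ b u₂ e
      obtain ⟨v₁, v₂, e', h1, h2⟩ := h.2 u₁ b u₂ e
      exact ⟨v₁, v₂, e', ih h1, ih h2⟩
    · intro u₁ b u₂ e
      obtain ⟨v₁, v₂, e', h1, h2⟩ := h.1 u₁ b u₂ e
      exact ⟨v₁, v₂, e', ih h1, ih h2⟩

theorem E_of_half {B : Type} {k : ℕ} (R : List B → List B → Prop) (hs : ∀ u v, R u v → R v u)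
    (h : ∀ u v, R u v → ∀ u₁ b u₂, u = u₁ ++ b :: u₂ →
      ∃ v₁ v₂, v = v₁ ++ b :: v₂ ∧ E k u₁ v₁ ∧ E k u₂ v₂)
    {u v : List B} (hR : R u v) : E (k + 1) u v := by
  refine ⟨h u v hR, fun v₁ b v₂ e => ?_⟩
  obtain ⟨u₁, u₂, e', h1, h2⟩ := h v u (hs _ _ hR) v₁ b v₂ e
  exact ⟨u₁, u₂, e', E_symm h1, E_symm h2⟩

theorem E_mono {B : Type} {k : ℕ} {u v : List B} (h : E (k + 1) u v) : E k u v := by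
  induction k generalizing u v with
  | zero => trivial
  | succ k ih =>
    refine E_of_half (E (k + 1 + 1)) (fun _ _ => E_symm) ?_ h
    intro u v h u₁ b u₂ e
    obtain ⟨v₁, v₂, e', h1, h2⟩ := h.1 u₁ b u₂ e
    exact ⟨v₁, v₂, e', ih h1, ih h2⟩

theorem E_le {B : Type} {k l : ℕ} (hl : k ≤ l) {u v : List B} (h : E l u v) : E k u v := by
  induction l, hl using Nat.le_induction with
  | base => exact h
  | succ l _ ih => exact ih (E_mono h)

theorem append_split {B : Type} {u u' u₁ u₂ : List B} {b : B} (h : u ++ u' = u₁ ++ b :: u₂) :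
    (∃ s, u = u₁ ++ b :: s ∧ u₂ = s ++ u') ∨ (∃ s, u' = s ++ b :: u₂ ∧ u₁ = u ++ s) := by
  rcases List.append_eq_append_iff.1 h with ⟨s, h1, h2⟩ | ⟨s, h1, h2⟩
  · exact Or.inr ⟨s, h2, h1⟩
  · rcases s with _ | ⟨c, s⟩
    · right; exact ⟨[], by simpa using h2.symm, by simpa using h1.symm⟩
    · simp only [List.cons_append, List.cons.injEq] at h2
      left; exact ⟨s, by rw [h1, h2.1], h2.2⟩

theorem E_append {B : Type} {k : ℕ} {u v u' v' : List B} (h : E k u v) (h' : E k u' v') :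
    E k (u ++ u') (v ++ v') := by
  induction k generalizing u v u' v' with
  | zero => trivial
  | succ k ih =>
    refine E_of_half (fun x y => ∃ u v u' v' : List B, E (k + 1) u v ∧ E (k + 1) u' v' ∧
      x = u ++ u' ∧ y = v ++ v') ?_ ?_ ⟨u, v, u', v', h, h', rfl, rfl⟩
    · rintro x y ⟨u, v, u', v', h, h', rfl, rfl⟩
      exact ⟨v, u, v', u', E_symm h, E_symm h', rfl, rfl⟩
    · rintro x y ⟨u, v, u', v', h, h', rfl, rfl⟩ u₁ b u₂ e
      rcases append_split e with ⟨s, rfl, rfl⟩ | ⟨s, rfl, rfl⟩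
      · obtain ⟨v₁, v₂, rfl, h1, h2⟩ := h.1 u₁ b s rfl
        exact ⟨v₁, v₂ ++ v', by simp, h1, ih h2 (E_mono h')⟩
      · obtain ⟨v₁, v₂, rfl, h1, h2⟩ := h'.1 s b u₂ rfl
        exact ⟨v ++ v₁, v₂, by simp, ih (E_mono h) h1, h2⟩

theorem E_map {B C : Type} (f : B → C) {k : ℕ} {u v : List B} (h : E k u v) :
    E k (u.map f) (v.map f) := by
  induction k generalizing u v with
  | zero => trivial
  | succ k ih =>
    refine E_of_half (fun x y => ∃ u v : List B, E (k + 1) u v ∧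
      x = u.map f ∧ y = v.map f) ?_ ?_ ⟨u, v, h, rfl, rfl⟩
    · rintro x y ⟨u, v, h, rfl, rfl⟩
      exact ⟨v, u, E_symm h, rfl, rfl⟩
    · rintro x y ⟨u, v, h, rfl, rfl⟩ u₁ c u₂ e
      obtain ⟨s, t, rfl, rfl, ht⟩ := List.map_eq_append_iff.1 e
      obtain ⟨b, t, rfl, rfl, rfl⟩ := List.map_eq_cons_iff.1 ht
      obtain ⟨v₁, v₂, rfl, h1, h2⟩ := h.1 s b t rfl
      exact ⟨v₁.map f, v₂.map f, by simp, ih h1, ih h2⟩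

theorem wpow_split {B : Type} (u : List B) (n : ℕ) (u₁ u₂ : List B) (b : B)
    (h : wpow u n = u₁ ++ b :: u₂) :
    ∃ i j x y, n = i + 1 + j ∧ u = x ++ b :: y ∧ u₁ = wpow u i ++ x ∧ u₂ = y ++ wpow u j := by
  induction n generalizing u₁ with
  | zero => simp [wpow_zero] at h
  | succ n ih =>
    rw [wpow_succ] at h
    rcases append_split h with ⟨s, hs, rfl⟩ | ⟨s, hs, rfl⟩
    · exact ⟨0, n, u₁, s, by omega, hs, by simp [wpow_zero], rfl⟩
    · obtain ⟨i, j, x, y, rfl, hu, rfl, rfl⟩ := ih s hs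
      exact ⟨i + 1, j, x, y, by omega, hu, by simp [wpow_succ], rfl⟩

theorem E_wpow {B : Type} (u : List B) (k n m : ℕ)
    (h : n = m ∨ (2 ^ k ≤ n + 1 ∧ 2 ^ k ≤ m + 1)) : E k (wpow u n) (wpow u m) := by
  induction k generalizing n m with
  | zero => trivial
  | succ k ih =>
    refine E_of_half (fun x y => ∃ n m, (n = m ∨ (2 ^ (k + 1) ≤ n + 1 ∧ 2 ^ (k + 1) ≤ m + 1)) ∧
      x = wpow u n ∧ y = wpow u m) ?_ ?_ ⟨n, m, h, rfl, rfl⟩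
    · rintro x y ⟨n, m, h, rfl, rfl⟩
      exact ⟨m, n, by omega, rfl, rfl⟩
    · rintro x y ⟨n, m, h, rfl, rfl⟩ u₁ b u₂ e
      obtain ⟨i, j, x, y, rfl, hu, rfl, rfl⟩ := wpow_split u n u₁ u₂ b e
      have key : ∃ i' j', m = i' + 1 + j' ∧ (i = i' ∨ (2 ^ k ≤ i + 1 ∧ 2 ^ k ≤ i' + 1)) ∧
          (j = j' ∨ (2 ^ k ≤ j + 1 ∧ 2 ^ k ≤ j' + 1)) := by
        rw [pow_succ] at h
        have hK : 0 < 2 ^ k := by positivity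
        generalize 2 ^ k = K at *
        rcases h with rfl | h
        · exact ⟨i, j, rfl, Or.inl rfl, Or.inl rfl⟩
        · by_cases h1 : i + 1 < K
          · exact ⟨i, m - 1 - i, by omega, by omega, by omega⟩
          · by_cases h2 : j + 1 < K
            · exact ⟨m - 1 - j, j, by omega, by omega, by omega⟩
            · exact ⟨K - 1, m - K, by omega, by omega, by omega⟩
      obtain ⟨i', j', rfl, hi, hj⟩ := key
      refine ⟨wpow u i' ++ x, y ++ wpow u j', ?_, E_append (ih _ _ hi) (E_refl _ _),
        E_append (E_refl _ _) (ih _ _ hj)⟩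
      rw [wpow_add, wpow_add, wpow_succ, wpow_zero]
      conv_lhs => rw [List.append_nil]
      nth_rewrite 2 [hu]
      simp

/-! ### First-order formulas and games -/

attribute [local instance] wordStructure

def mk {A : Type} {n : ℕ} (w : List A) (a : Fin n → Fin w.length) : List (A × (Fin n → Prop)) :=
  List.ofFn fun i => (w.get i, fun x => a x = i)

theorem mem_mk {A : Type} {n : ℕ} {w : List A} {a : Fin n → Fin w.length} {c : A × (Fin n → Prop)} :
    c ∈ mk w a ↔ ∃ i, (w.get i, fun x => a x = i) = c := by
  simp [mk, List.mem_ofFn]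

theorem mk_length {A : Type} {n : ℕ} (w : List A) (a : Fin n → Fin w.length) :
    (mk w a).length = w.length := by simp [mk]

theorem mk_get {A : Type} {n : ℕ} (w : List A) (a : Fin n → Fin w.length) (i : ℕ)
    (h : i < (mk w a).length) : (mk w a)[i] =
      (w.get ⟨i, by simpa [mk] using h⟩, fun x => a x = ⟨i, by simpa [mk] using h⟩) := by
  simp [mk]

theorem eq_iff_mk {A : Type} {n : ℕ} (w : List A) (a : Fin n → Fin w.length) (x y : Fin n) :
    a x = a y ↔ ∃ c ∈ mk w a, c.2 x ∧ c.2 y := by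
  constructor
  · intro h
    exact ⟨_, mem_mk.2 ⟨a x, rfl⟩, rfl, h.symm⟩
  · rintro ⟨c, hc, hx, hy⟩
    obtain ⟨i, rfl⟩ := mem_mk.1 hc
    exact Eq.trans (show a x = i from hx) (show a y = i from hy).symm

theorem letter_iff_mk {A : Type} {n : ℕ} (w : List A) (a : Fin n → Fin w.length) (x : Fin n)
    (l : A) : w.get (a x) = l ↔ ∃ c ∈ mk w a, c.1 = l ∧ c.2 x := by
  constructor
  · intro h
    exact ⟨_, mem_mk.2 ⟨a x, rfl⟩, h, rfl⟩
  · rintro ⟨c, hc, hx, hy⟩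
    obtain ⟨i, rfl⟩ := mem_mk.1 hc
    have : a x = i := hy
    rw [this]; exact hx

theorem lt_iff_mk {A : Type} {n : ℕ} (w : List A) (a : Fin n → Fin w.length) (x y : Fin n) :
    a x < a y ↔ ∃ u₁ c u₂, mk w a = u₁ ++ c :: u₂ ∧ c.2 x ∧ ∃ d ∈ u₂, d.2 y := by
  constructor
  · intro h
    have hx : (a x).1 < (mk w a).length := by rw [mk_length]; exact (a x).2
    have hy : (a y).1 < (mk w a).length := by rw [mk_length]; exact (a y).2
    refine ⟨(mk w a).take (a x), (mk w a)[(a x).1], (mk w a).drop ((a x).1 + 1), ?_, ?_,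
      (mk w a)[(a y).1], ?_, ?_⟩
    · rw [List.getElem_cons_drop, List.take_append_drop]
    · rw [mk_get]
    · rw [List.mem_iff_getElem]
      refine ⟨(a y).1 - ((a x).1 + 1), ?_, ?_⟩
      · rw [List.length_drop]; have : (a x).1 < (a y).1 := h
        omega
      · rw [List.getElem_drop]
        congr 1
        have : (a x).1 < (a y).1 := h
        omega
    · rw [mk_get]
  · rintro ⟨u₁, c, u₂, e, hx, d, hd, hy⟩
    obtain ⟨j, hj, rfl⟩ := List.mem_iff_getElem.1 hd
    have hl := congrArg List.length e
    simp only [List.length_append, List.length_cons] at hl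
    have h1 : (mk w a)[u₁.length]'(by omega) = c := by simp [e]
    have h2 : (mk w a)[u₁.length + 1 + j]'(by omega) = u₂[j] := by
      simp only [e]
      rw [List.getElem_append_right (by omega)]
      simp [show u₁.length + 1 + j - u₁.length = j + 1 by omega]
    rw [mk_get] at h1 h2
    rw [← h1] at hx
    rw [← h2] at hy
    simp only at hx hy
    rw [hx, hy, Fin.mk_lt_mk]
    omega

theorem E_one {B : Type} {k : ℕ} {u v : List B} (h : E (k + 1) u v) (Q : B → Prop) :
    (∃ c ∈ u, Q c) ↔ ∃ c ∈ v, Q c := by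
  have aux : ∀ u v : List B, E (k + 1) u v → (∃ c ∈ u, Q c) → ∃ c ∈ v, Q c := by
    rintro u v h ⟨c, hc, hQ⟩
    obtain ⟨s, t, rfl⟩ := List.append_of_mem hc
    obtain ⟨v₁, v₂, rfl, _, _⟩ := h.1 s c t rfl
    exact ⟨c, by simp, hQ⟩
  exact ⟨aux _ _ h, aux _ _ (E_symm h)⟩

theorem E_two {B : Type} {k : ℕ} {u v : List B} (h : E (k + 2) u v) (Q Q' : B → Prop) :
    (∃ u₁ c u₂, u = u₁ ++ c :: u₂ ∧ Q c ∧ ∃ d ∈ u₂, Q' d) ↔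
    (∃ u₁ c u₂, v = u₁ ++ c :: u₂ ∧ Q c ∧ ∃ d ∈ u₂, Q' d) := by
  have aux : ∀ u v : List B, E (k + 2) u v →
    (∃ u₁ c u₂, u = u₁ ++ c :: u₂ ∧ Q c ∧ ∃ d ∈ u₂, Q' d) →
    (∃ u₁ c u₂, v = u₁ ++ c :: u₂ ∧ Q c ∧ ∃ d ∈ u₂, Q' d) := by
    rintro u v h ⟨u₁, c, u₂, rfl, hQ, hd⟩
    obtain ⟨v₁, v₂, rfl, _, h2⟩ := h.1 u₁ c u₂ rfl
    exact ⟨v₁, c, v₂, rfl, hQ, (E_one h2 Q').1 hd⟩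
  exact ⟨aux _ _ h, aux _ _ (E_symm h)⟩

def up {A : Type} {n : ℕ} (P : Prop) (c : A × (Fin n → Prop)) : A × (Fin (n + 1) → Prop) :=
  (c.1, Fin.snoc (α := fun _ => Prop) c.2 P)

theorem mk_snoc {A : Type} {n : ℕ} (w : List A) (a : Fin n → Fin w.length) (p : Fin w.length)
    (u₁ u₂ : List (A × (Fin n → Prop))) (c : A × (Fin n → Prop))
    (e : mk w a = u₁ ++ c :: u₂) (hp : p.1 = u₁.length) :
    mk w (Fin.snoc (α := fun _ => Fin w.length) a p) =
      u₁.map (up False) ++ up True c :: u₂.map (up False) := by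
  have hl := congrArg List.length e
  rw [mk_length] at hl
  simp only [List.length_append, List.length_cons] at hl
  have hup : ∀ i (hi : i < w.length), (mk w (Fin.snoc (α := fun _ => Fin w.length) a p))[i]'(by
      rw [mk_length]; exact hi) = up (p.1 = i) ((mk w a)[i]'(by rw [mk_length]; exact hi)) := by
    intro i hi
    rw [mk_get, mk_get, up]
    refine Prod.ext rfl ?_
    funext x
    refine Fin.lastCases ?_ (fun x => ?_) x
    · simp [Fin.ext_iff]
    · simp
  apply List.ext_getElem
  · rw [mk_length]; simp; omega
  · intro i h1 h2
    rw [mk_length] at h1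
    rw [hup i h1]
    simp only [e]
    rw [hp]
    rcases lt_trichotomy i u₁.length with h | h | h
    · rw [List.getElem_append_left h, List.getElem_append_left (by simpa using h)]
      simp [h.ne']
    · subst h
      simp
    · rw [List.getElem_append_right h.le, List.getElem_append_right (by simpa using h.le)]
      obtain ⟨j, rfl⟩ := Nat.exists_eq_add_of_lt h
      simp [show u₁.length + j + 1 - u₁.length = j + 1 by omega,
        show ¬ (u₁.length = u₁.length + j + 1) by omega]

theorem E_snoc {A : Type} {n k : ℕ} {w v : List A} {a : Fin n → Fin w.length}
    {b : Fin n → Fin v.length} (h : E (k + 1) (mk w a) (mk v b)) (p : Fin w.length) :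
    ∃ q : Fin v.length, E k (mk w (Fin.snoc (α := fun _ => Fin w.length) a p))
      (mk v (Fin.snoc (α := fun _ => Fin v.length) b q)) := by
  have hp : p.1 < (mk w a).length := by rw [mk_length]; exact p.2
  have e : mk w a = (mk w a).take p ++ (mk w a)[p.1] :: (mk w a).drop (p.1 + 1) := by
    rw [List.getElem_cons_drop, List.take_append_drop]
  obtain ⟨v₁, v₂, e', h1, h2⟩ := h.1 _ _ _ e
  have hl := congrArg List.length e'
  rw [mk_length] at hl
  simp only [List.length_append, List.length_cons] at hl
  refine ⟨⟨v₁.length, by omega⟩, ?_⟩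
  rw [mk_snoc w a p _ _ _ e (by simp; omega), mk_snoc v b ⟨v₁.length, by omega⟩ _ _ _ e' rfl]
  exact E_append (E_map _ h1) (E_append (u := [_]) (v := [_]) (E_refl _ _) (E_map _ h2))

theorem term_var {A : Type} {n : ℕ} (t : (wordLang A).Term (Empty ⊕ Fin n)) :
    ∃ x : Fin n, t = FirstOrder.Language.Term.var (Sum.inr x) := by
  cases t with
  | var x =>
    rcases x with x | x
    · exact x.elim
    · exact ⟨x, rfl⟩
  | func f _ => exact Empty.elim f

theorem game {A : Type} {n : ℕ} (φ : (wordLang A).BoundedFormula Empty n) :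
    ∃ k, ∀ (w v : List A) (a : Fin n → Fin w.length) (b : Fin n → Fin v.length),
      E k (mk w a) (mk v b) → (φ.Realize default a ↔ φ.Realize default b) := by
  induction φ with
  | falsum => exact ⟨0, fun _ _ _ _ _ => Iff.rfl⟩
  | equal t₁ t₂ =>
    obtain ⟨x, rfl⟩ := term_var t₁
    obtain ⟨y, rfl⟩ := term_var t₂
    refine ⟨1, fun w v a b h => ?_⟩
    change a x = a y ↔ b x = b y
    rw [eq_iff_mk, eq_iff_mk]
    exact E_one h _
  | @rel n l R ts =>
    match l, R, ts with
    | 0, R, _ => exact Empty.elim R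
    | 1, R, ts =>
      obtain ⟨x, hx⟩ := term_var (ts 0)
      refine ⟨1, fun w v a b h => ?_⟩
      change w.get ((ts 0).realize (Sum.elim default a)) = R ↔
        v.get ((ts 0).realize (Sum.elim default b)) = R
      rw [hx]
      exact (letter_iff_mk w a x R).trans ((E_one h _).trans (letter_iff_mk v b x R).symm)
    | 2, R, ts =>
      obtain ⟨x, hx⟩ := term_var (ts 0)
      obtain ⟨y, hy⟩ := term_var (ts 1)
      refine ⟨2, fun w v a b h => ?_⟩
      change (ts 0).realize (Sum.elim default a) < (ts 1).realize (Sum.elim default a) ↔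
        (ts 0).realize (Sum.elim default b) < (ts 1).realize (Sum.elim default b)
      rw [hx, hy]
      change a x < a y ↔ b x < b y
      rw [lt_iff_mk, lt_iff_mk]
      exact E_two h _ _
    | n + 3, R, _ => exact Empty.elim R
  | imp φ ψ ih1 ih2 =>
    obtain ⟨k, hk⟩ := ih1
    obtain ⟨l, hl⟩ := ih2
    refine ⟨max k l, fun w v a b h => ?_⟩
    rw [FirstOrder.Language.BoundedFormula.realize_imp,
      FirstOrder.Language.BoundedFormula.realize_imp,
      hk w v a b (E_le (le_max_left _ _) h), hl w v a b (E_le (le_max_right _ _) h)]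
  | all φ ih =>
    obtain ⟨k, hk⟩ := ih
    refine ⟨k + 1, fun w v a b h => ?_⟩
    rw [FirstOrder.Language.BoundedFormula.realize_all,
      FirstOrder.Language.BoundedFormula.realize_all]
    constructor
    · intro H q
      obtain ⟨p, hp⟩ := E_snoc (E_symm h) q
      exact (hk _ _ _ _ (E_symm hp)).1 (H p)
    · intro H p
      obtain ⟨q, hq⟩ := E_snoc h p
      exact (hk _ _ _ _ hq).2 (H q)

theorem mk_zero {A : Type} (w : List A) (a : Fin 0 → Fin w.length) :
    mk w a = w.map fun c => (c, fun x => x.elim0) := by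
  apply List.ext_getElem
  · simp [mk]
  · intro i h1 h2
    rw [mk_get]
    simp only [List.get_eq_getElem, List.getElem_map, Prod.mk.injEq, true_and]
    funext x; exact x.elim0

theorem aper_of_fo {A : Type} {L : Set (List A)} (h : FODefinable L) : Aper L := by
  obtain ⟨θ, rfl⟩ := h
  obtain ⟨k, hk⟩ := game θ
  refine ⟨2 ^ k, fun n hn x u y => ?_⟩
  have hpos : 0 < 2 ^ k := by positivity
  obtain ⟨m, rfl⟩ : ∃ m, n = m + 1 := ⟨n - 1, by omega⟩
  have hE : E k (x ++ wpow u (m + 1) ++ y) (x ++ wpow u (m + 1 + 1) ++ y) :=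
    E_append (E_append (E_refl _ _) (E_wpow _ _ _ _ (by omega))) (E_refl _ _)
  have hs := hk (x ++ wpow u (m + 1) ++ y) (x ++ wpow u (m + 1 + 1) ++ y) default default (by
    rw [mk_zero, mk_zero]; exact E_map _ hE)
  simp only [Set.mem_ofPred_eq]
  refine and_congr ?_ hs
  simp [wpow_succ]

end SMP
namespace SMP

/-! ### From star-free languages to first-order formulas -/

attribute [local instance] wordStructure

def FDef {A : Type} (α : Type) (P : ∀ w : List A, (α → Fin w.length) → Prop) : Prop :=
  ∃ φ : (wordLang A).Formula α, ∀ (w : List A) (v : α → Fin w.length), φ.Realize v ↔ P w v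

section FDef
variable {A α β : Type} {P Q : ∀ w : List A, (α → Fin w.length) → Prop}

theorem FDef.not (h : FDef α P) : FDef α (fun w v => ¬ P w v) := by
  obtain ⟨φ, h⟩ := h
  exact ⟨φ.not, fun w v => by rw [FirstOrder.Language.Formula.realize_not, h]⟩

theorem FDef.and (h : FDef α P) (h' : FDef α Q) : FDef α (fun w v => P w v ∧ Q w v) := by
  obtain ⟨φ, h⟩ := h
  obtain ⟨ψ, h'⟩ := h'
  exact ⟨φ ⊓ ψ, fun w v => by rw [FirstOrder.Language.Formula.realize_inf, h, h']⟩

theorem FDef.or (h : FDef α P) (h' : FDef α Q) : FDef α (fun w v => P w v ∨ Q w v) := by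
  obtain ⟨φ, h⟩ := h
  obtain ⟨ψ, h'⟩ := h'
  exact ⟨φ ⊔ ψ, fun w v => by rw [FirstOrder.Language.Formula.realize_sup, h, h']⟩

theorem FDef.lt (i j : α) : FDef (A := A) α (fun _ v => v i < v j) :=
  ⟨FirstOrder.Language.Relations.formula₂ (L := wordLang A) (show (wordLang A).Relations 2 from ())
    (FirstOrder.Language.Term.var i) (FirstOrder.Language.Term.var j), fun w v => by
      rw [FirstOrder.Language.Formula.realize_rel₂]; rfl⟩

theorem FDef.letter (a : A) (i : α) : FDef (A := A) α (fun w v => w.get (v i) = a) :=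
  ⟨FirstOrder.Language.Relations.formula₁ (L := wordLang A) (show (wordLang A).Relations 1 from a)
    (FirstOrder.Language.Term.var i), fun w v => by
      rw [FirstOrder.Language.Formula.realize_rel₁]; rfl⟩

theorem FDef.relabel (g : α → β) (h : FDef α P) : FDef β (fun w v => P w (v ∘ g)) := by
  obtain ⟨φ, h⟩ := h
  exact ⟨φ.relabel g, fun w v => by rw [FirstOrder.Language.Formula.realize_relabel, h]⟩

theorem FDef.ex {P : ∀ w : List A, (α ⊕ Unit → Fin w.length) → Prop} (h : FDef (α ⊕ Unit) P) :
    FDef α (fun w v => ∃ x, P w (Sum.elim v fun _ => x)) := by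
  obtain ⟨φ, h⟩ := h
  refine ⟨φ.iExs Unit, fun w v => ?_⟩
  rw [FirstOrder.Language.Formula.realize_iExs]
  constructor
  · rintro ⟨x, hx⟩
    exact ⟨x (), (h _ _).1 hx⟩
  · rintro ⟨x, hx⟩
    exact ⟨fun _ => x, (h _ _).2 hx⟩

theorem FDef.succ (i j : α) : FDef (A := A) α (fun _ v => (v j).1 = (v i).1 + 1) := by
  have h1 : FDef (A := A) α (fun w v => ∃ x, v i < x ∧ x < v j) :=
    FDef.ex (P := fun _ v => v (.inl i) < v (.inr ()) ∧ v (.inr ()) < v (.inl j))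
      ((FDef.lt _ _).and (FDef.lt _ _))
  obtain ⟨φ, h⟩ := (FDef.lt i j).and h1.not
  refine ⟨φ, fun w v => (h w v).trans ?_⟩
  constructor
  · rintro ⟨h1, h2⟩
    have h1 : (v i).1 < (v j).1 := h1
    by_contra hc
    exact h2 ⟨⟨(v i).1 + 1, by omega⟩, Fin.lt_def.2 (by simp), Fin.lt_def.2 (by simp; omega)⟩
  · intro e
    refine ⟨Fin.lt_def.2 (by omega), ?_⟩
    rintro ⟨x, h1, h2⟩
    have h1 : (v i).1 < x.1 := h1
    have h2 : x.1 < (v j).1 := h2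
    omega

end FDef

def slice {A : Type} (w : List A) (i j : ℕ) : List A := (w.take (j + 1)).drop i

theorem slice_length {A : Type} (w : List A) (i j : ℕ) (h : j < w.length) :
    (slice w i j).length = j + 1 - i := by
  simp [slice]; omega

theorem slice_append {A : Type} (w : List A) (i z j : ℕ) (h1 : i ≤ z) (h2 : z < j)
    (h : j < w.length) : slice w i j = slice w i z ++ slice w (z + 1) j := by
  unfold slice
  have e : w.take (z + 1) = (w.take (j + 1)).take (z + 1) := by
    rw [List.take_take, min_eq_left (by omega)]
  rw [e]
  conv_lhs => rw [← List.take_append_drop (z + 1) (w.take (j + 1))]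
  rw [List.drop_append_of_le_length]
  simp; omega

theorem slice_concat {A : Type} {L₁ L₂ : Set (List A)} (h1 : [] ∉ L₁) (h2 : [] ∉ L₂) (w : List A)
    (i j : Fin w.length) :
    (∃ u ∈ L₁, ∃ v ∈ L₂, slice w i j = u ++ v) ↔
      ∃ z z' : Fin w.length, z'.1 = z.1 + 1 ∧ slice w i z ∈ L₁ ∧ slice w z' j ∈ L₂ := by
  constructor
  · rintro ⟨u, hu, v, hv, e⟩
    have hu0 : 0 < u.length := List.length_pos_iff.2 fun h => h1 (h ▸ hu)
    have hv0 : 0 < v.length := List.length_pos_iff.2 fun h => h2 (h ▸ hv)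
    have hl := congrArg List.length e
    rw [slice_length w i j j.2, List.length_append] at hl
    have hj := j.2
    rw [slice_append w i (i + u.length - 1) j (by omega) (by omega) hj] at e
    obtain ⟨e1, e2⟩ := List.append_inj e (by rw [slice_length _ _ _ (by omega)]; omega)
    exact ⟨⟨i + u.length - 1, by omega⟩, ⟨i + u.length - 1 + 1, by omega⟩, rfl, e1 ▸ hu, e2 ▸ hv⟩
  · rintro ⟨z, z', hz, hu, hv⟩
    have hu0 : 0 < (slice w i z).length := List.length_pos_iff.2 fun h => h1 (h ▸ hu)
    have hv0 : 0 < (slice w z' j).length := List.length_pos_iff.2 fun h => h2 (h ▸ hv)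
    rw [slice_length _ _ _ z.2] at hu0
    rw [slice_length _ _ _ j.2] at hv0
    refine ⟨_, hu, _, hv, ?_⟩
    rw [hz]
    exact slice_append w i z j (by omega) (by omega) j.2

theorem StarFree_nil {A : Type} {L : Set (List A)} (h : StarFree L) : [] ∉ L := by
  induction h with
  | all => simp
  | single a => simp
  | concat _ _ h1 h2 =>
    rintro ⟨u, hu, v, hv, e⟩
    have := (List.append_eq_nil_iff.1 e.symm).1
    exact h1 (this ▸ hu)
  | union _ _ h1 h2 =>
    rintro (h | h)
    · exact h1 h
    · exact h2 h
  | compl _ _ => rintro ⟨h, _⟩; exact h rfl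

theorem slice_ne {A : Type} (w : List A) (i j : Fin w.length) : slice w i j ≠ [] ↔ ¬ j < i := by
  rw [← List.length_pos_iff, slice_length _ _ _ j.2, Fin.lt_def]
  omega

theorem fdef_slice {A : Type} {L : Set (List A)} (h : StarFree L) :
    FDef (A := A) (Fin 2) (fun w v => slice w (v 0) (v 1) ∈ L) := by
  induction h with
  | all =>
    simp only [Set.mem_ofPred_eq, slice_ne]
    exact (FDef.lt _ _).not
  | single a =>
    obtain ⟨φ, h⟩ := ((FDef.lt (A := A) (0 : Fin 2) 1).not.and (FDef.lt (1 : Fin 2) 0).not).and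
      (FDef.letter a (0 : Fin 2))
    refine ⟨φ, fun w v => (h w v).trans ?_⟩
    have aux : slice w (v 0) (v 0) = [w.get (v 0)] := by
      apply List.ext_getElem
      · rw [slice_length _ _ _ (v 0).2]; simp
      · intro i h1 h2
        have : i = 0 := by simpa using h2
        subst this
        simp [slice]
    constructor
    · rintro ⟨⟨h1, h2⟩, h3⟩
      have : v 0 = v 1 := le_antisymm (not_lt.1 h2) (not_lt.1 h1)
      rw [← this, aux, h3]; rfl
    · intro e
      have e : slice w (v 0) (v 1) = [a] := e
      have hl := congrArg List.length e
      rw [slice_length _ _ _ (v 1).2] at hl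
      simp only [List.length_singleton] at hl
      have : v 0 = v 1 := Fin.ext (by omega)
      rw [← this, aux] at e
      exact ⟨by simp [this], by simpa using e⟩
  | @concat L₁ L₂ s1 s2 h1 h2 =>
    have hc := FDef.ex (FDef.ex (((FDef.succ (A := A) (α := (Fin 2 ⊕ Unit) ⊕ Unit)
      (.inl (.inr ())) (.inr ())).and
      ((h1.relabel ![.inl (.inl 0), .inl (.inr ())]).and (h2.relabel ![.inr (), .inl (.inl 1)])))))
    obtain ⟨φ, h⟩ := hc
    refine ⟨φ, fun w v => (h w v).trans ?_⟩
    exact (slice_concat (StarFree_nil s1) (StarFree_nil s2) w (v 0) (v 1)).symm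
  | union _ _ h1 h2 => exact h1.or h2
  | compl _ h1 =>
    obtain ⟨φ, h⟩ := (FDef.lt (A := A) (1 : Fin 2) 0).not.and h1.not
    refine ⟨φ, fun w v => (h w v).trans ?_⟩
    exact and_congr (slice_ne w _ _).symm Iff.rfl

theorem fo_of_starFree {A : Type} {L : Set (List A)} (h : StarFree L) : FODefinable L := by
  have hfirst : FDef (A := A) ((Empty ⊕ Unit) ⊕ Unit)
      (fun w v => ∃ x, x < v (.inl (.inr ()))) :=
    FDef.ex (P := fun w (v : ((Empty ⊕ Unit) ⊕ Unit) ⊕ Unit → Fin w.length) => v (.inr ()) < v (.inl (.inl (.inr ())))) (FDef.lt _ _)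
  have hlast : FDef (A := A) ((Empty ⊕ Unit) ⊕ Unit)
      (fun w v => ∃ x, v (.inr ()) < x) :=
    FDef.ex (P := fun w (v : ((Empty ⊕ Unit) ⊕ Unit) ⊕ Unit → Fin w.length) => v (.inl (.inr ())) < v (.inr ())) (FDef.lt _ _)
  obtain ⟨φ, hφ⟩ := FDef.ex (FDef.ex ((hfirst.not.and hlast.not).and
    ((fdef_slice h).relabel ![.inl (.inr ()), .inr ()])))
  refine ⟨φ, ?_⟩
  ext w
  have hsat : SatWord w φ ↔ _ := hφ w default
  rw [Set.mem_ofPred_eq, hsat]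
  have hfull : ∀ j : ℕ, j + 1 = w.length → slice w 0 j = w := by
    intro j hj; simp [slice, hj]
  constructor
  · intro hw
    have hne : w ≠ [] := fun e => StarFree_nil h (e ▸ hw)
    have hpos := List.length_pos_iff.2 hne
    refine ⟨hne, ⟨0, hpos⟩, ⟨w.length - 1, by omega⟩, ⟨?_, ?_⟩, ?_⟩
    · rintro ⟨x, hx⟩
      exact Nat.not_lt_zero _ (Fin.lt_def.1 hx)
    · rintro ⟨x, hx⟩
      have hx : w.length - 1 < x.1 := hx
      have := x.2
      omega
    · change slice w 0 (w.length - 1) ∈ L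
      rw [hfull _ (by omega)]; exact hw
  · rintro ⟨hne, i, j, ⟨hi, hj⟩, hs⟩
    have hs : slice w i j ∈ L := hs
    have hpos := List.length_pos_iff.2 hne
    have hi0 : i.1 = 0 := by
      by_contra hc
      exact hi ⟨⟨0, hpos⟩, Fin.lt_def.2 (Nat.pos_of_ne_zero hc)⟩
    have hj0 : j.1 + 1 = w.length := by
      by_contra hc
      have := j.2
      exact hj ⟨⟨j.1 + 1, by omega⟩, Fin.lt_def.2 (Nat.lt_succ_self _)⟩
    rwa [hi0, hfull _ hj0] at hs

end SMP

/-- The Schützenberger–McNaughton–Papert theorem. -/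
theorem schutzenberger_mcnaughton_papert
    {A : Type} [Fintype A] (L : Set (List A)) (hne : [] ∉ L)
    (hreg : Language.IsRegular (L : Language A)) :
    (StarFree L ↔
        ∃ (σ : Type) (_ : Fintype σ) (M : DFA A σ), IsCounterFree M ∧ M.accepts = L) ∧
    (StarFree L ↔
        ∃ (S : FinSemigroup) (h : List A → S.carrier) (F : Set S.carrier),
          IsAperiodic S.carrier ∧ RecognisedBy h F L) ∧
    (StarFree L ↔ FODefinable L) := by
  have c1 : StarFree L → FODefinable L := SMP.fo_of_starFree
  have c2 : FODefinable L →
      ∃ (σ : Type) (_ : Fintype σ) (M : DFA A σ), IsCounterFree M ∧ M.accepts = L :=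
    fun h => SMP.dfa_of_aper L hreg (SMP.aper_of_fo h)
  have c3 : (∃ (σ : Type) (_ : Fintype σ) (M : DFA A σ), IsCounterFree M ∧ M.accepts = L) →
      ∃ (S : FinSemigroup) (h : List A → S.carrier) (F : Set S.carrier),
          IsAperiodic S.carrier ∧ RecognisedBy h F L := by
    rintro ⟨σ, _, M, hM, hL⟩
    exact SMP.semigroup_of_dfa M hM L hne hL
  have c4 : (∃ (S : FinSemigroup) (h : List A → S.carrier) (F : Set S.carrier),
          IsAperiodic S.carrier ∧ RecognisedBy h F L) → StarFree L := by
    rintro ⟨S, h, F, hS, hL⟩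
    exact SMP.starFree_of_semigroup hS h F L hL
  exact ⟨⟨fun h => c2 (c1 h), fun h => c4 (c3 h)⟩, ⟨fun h => c3 (c2 (c1 h)), c4⟩,
    ⟨c1, fun h => c4 (c3 (c2 h))⟩⟩
end

section
/- (Kamp's theorem over finite timelines.) For every FO-formula θ(x) in the signature σ_lin with one free variable x, there is an LTL-formula φ_θ such that for every finite temporal model M: M ⊨ θ(0) if and only if M,0 ⊨ φ_θ. -/
open FirstOrder

/-- LTL-formulas over propositional variables indexed by `ℕ`, with the temporal
operators ○ (next), ◇ (strict eventually) and U (strict until). -/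
inductive LTL : Type
  | top : LTL
  | var : ℕ → LTL
  | and : LTL → LTL → LTL
  | not : LTL → LTL
  | next : LTL → LTL
  | ev : LTL → LTL
  | untl : LTL → LTL → LTL

/-- A finite temporal model `({0,…,ℓ}, <, V)`, given by `ℓ = len` and the valuation `V`. -/
structure TModel : Type where
  len : ℕ
  V : ℕ → ℕ → Prop

/-- Truth of an LTL-formula at a time point `n ≤ len` of a finite temporal model. -/
def LTL.sat (M : TModel) : ℕ → LTL → Prop
  | _, .top => True
  | n, .var p => M.V p n
  | n, .and φ ψ => LTL.sat M n φ ∧ LTL.sat M n ψ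
  | n, .not φ => ¬ LTL.sat M n φ
  | n, .next φ => n < M.len ∧ LTL.sat M (n + 1) φ
  | n, .ev φ => ∃ m, n < m ∧ m ≤ M.len ∧ LTL.sat M m φ
  | n, .untl φ ψ => ∃ m, n < m ∧ m ≤ M.len ∧ LTL.sat M m φ ∧
      ∀ k, n < k → k < m → LTL.sat M k ψ

/-- Relation symbols of the signature `σ_lin`: a unary predicate `P_i` for each
propositional variable `p_i` and the binary predicate `<`. -/
def LinRel : ℕ → Type
  | 1 => ℕ
  | 2 => Unit
  | _ => Empty

/-- The first-order signature `σ_lin`. -/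
def linLang : FirstOrder.Language := ⟨fun _ => Empty, LinRel⟩

/-- A finite temporal model regarded as a `σ_lin`-structure with domain `{0,…,ℓ}`. -/
def TModel.toStructure (M : TModel) : linLang.Structure (Fin (M.len + 1)) where
  funMap := fun f _ => Empty.elim f
  RelMap := fun {n} r =>
    match n, r with
    | 1, p => fun v => M.V p (v 0)
    | 2, _ => fun v => v 0 < v 1

/-- Realization of a `σ_lin`-formula with one free variable at a time point. -/
def TModel.realizeAt (M : TModel) (θ : linLang.Formula (Fin 1)) (t : Fin (M.len + 1)) :
    Prop :=
  letI := M.toStructure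
  θ.Realize (fun _ => t)


set_option linter.unusedSimpArgs false
set_option linter.unusedSectionVars false

namespace Kamp

/-- Next on words. -/
def Nx {A : Type} (P : List A → Prop) : List A → Prop
  | [] => False
  | _ :: w => P w

/-- Nonstrict until on words (positions are suffixes, including the empty one). -/
def Un {A : Type} (P P' : List A → Prop) : List A → Prop
  | [] => P []
  | a :: w => P (a :: w) ∨ (P' (a :: w) ∧ Un P P' w)

theorem Nx_nil {A : Type} (P : List A → Prop) : Nx P [] ↔ False := Iff.rfl
theorem Nx_cons {A : Type} (P : List A → Prop) (a w) : Nx P (a :: w) ↔ P w := Iff.rfl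
theorem Un_nil {A : Type} (P P' : List A → Prop) : Un P P' [] ↔ P [] := Iff.rfl
theorem Un_cons {A : Type} (P P' : List A → Prop) (a w) :
    Un P P' (a :: w) ↔ P (a :: w) ∨ (P' (a :: w) ∧ Un P P' w) := Iff.rfl

/-- Definable word properties relative to words over `S`. -/
inductive D {A : Type} (S : Set A) : (List A → Prop) → Prop
  | top : D S (fun _ => True)
  | letter (a : A) : D S (fun w => w.head? = some a)
  | and {P P'} : D S P → D S P' → D S (fun w => P w ∧ P' w)
  | not {P} : D S P → D S (fun w => ¬ P w)
  | next {P} : D S P → D S (Nx P)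
  | untl {P P'} : D S P → D S P' → D S (Un P P')
  | congr {P P'} : D S P → (∀ w, (∀ x ∈ w, x ∈ S) → (P w ↔ P' w)) → D S P'

namespace D
variable {A : Type} {S : Set A}

theorem of_iff {P P' : List A → Prop} (h : D S P) (e : ∀ w, P w ↔ P' w) : D S P' :=
  h.congr fun w _ => e w

theorem or {P P' : List A → Prop} (h : D S P) (h' : D S P') : D S (fun w => P w ∨ P' w) :=
  (h.not.and h'.not).not.of_iff fun w => by tauto

theorem const (p : Prop) : D S (fun _ => p) := by
  by_cases h : p
  · exact D.top.of_iff (by simp [h])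
  · exact D.top.not.of_iff (by simp [h])

theorem all_fin : ∀ (n : ℕ) (P : Fin n → List A → Prop), (∀ i, D S (P i)) →
    D S (fun w => ∀ i, P i w)
  | 0, P, _ => D.top.of_iff (by simp)
  | n + 1, P, h => ((h 0).and (all_fin n (fun i => P i.succ) fun i => h _)).of_iff fun w => by
      rw [Fin.forall_fin_succ]

theorem all {ι : Type} [Finite ι] {P : ι → List A → Prop} (h : ∀ i, D S (P i)) :
    D S (fun w => ∀ i, P i w) := by
  obtain ⟨n, ⟨e⟩⟩ := Finite.exists_equiv_fin ι
  refine (all_fin n (fun i => P (e.symm i)) fun i => h _).of_iff fun w => ?_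
  exact (e.symm.forall_congr_left).trans (by simp)

theorem ex {ι : Type} [Finite ι] {P : ι → List A → Prop} (h : ∀ i, D S (P i)) :
    D S (fun w => ∃ i, P i w) :=
  (all fun i => (h i).not).not.of_iff fun w => by push Not; rfl

end D

section cut
variable {A : Type} [DecidableEq A] (c : A)

def tw : List A → List A
  | [] => []
  | a :: w => if a = c then [] else a :: tw w

def aft : List A → List A
  | [] => []
  | a :: w => if a = c then w else aft w

def lst : List A → List A
  | [] => []
  | a :: w => if c ∈ w then lst w else if a = c then w else a :: w

def blocks : List A → List (List A)
  | [] => []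
  | a :: w => if a = c then [] :: blocks w else
      match blocks w with
      | [] => []
      | b :: bs => (a :: b) :: bs

variable {c}

theorem tw_mem {S : Set A} {w : List A} (h : ∀ x ∈ w, x ∈ S) :
    ∀ x ∈ tw c w, x ∈ S \ {c} := by
  induction w with
  | nil => simp [tw]
  | cons a w ih =>
    by_cases ha : a = c
    · simp [tw, ha]
    · simp only [tw, ha, if_false]
      intro x hx
      rcases List.mem_cons.1 hx with rfl | hx
      · exact ⟨h _ (by simp), ha⟩
      · exact ih (fun x hx => h x (by simp [hx])) x hx

theorem tw_eq {w : List A} (h : c ∉ w) : tw c w = w := by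
  induction w with
  | nil => rfl
  | cons a w ih =>
    simp only [List.mem_cons, not_or] at h
    simp [tw, ih h.2, Ne.symm h.1]

theorem tw_aft {w : List A} (h : c ∈ w) : tw c w ++ c :: aft c w = w := by
  induction w with
  | nil => simp at h
  | cons a w ih =>
    by_cases ha : a = c
    · simp [tw, aft, ha]
    · simp only [List.mem_cons, Ne.symm ha, false_or] at h
      simp [tw, aft, ha, ih h]

theorem blocks_nil {w : List A} : blocks c w = [] ↔ c ∉ w := by
  induction w with
  | nil => simp [blocks]
  | cons a w ih =>
    by_cases ha : a = c
    · simp [blocks, ha]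
    · cases hb : blocks c w <;> simp_all [blocks, Ne.symm]

theorem blocks_head {w : List A} (h : c ∈ w) : ∃ bs, blocks c w = tw c w :: bs := by
  induction w with
  | nil => simp at h
  | cons a w ih =>
    by_cases ha : a = c
    · simp [blocks, tw, ha]
    · simp only [List.mem_cons, Ne.symm ha, false_or] at h
      obtain ⟨bs, hbs⟩ := ih h
      simp [blocks, tw, ha, hbs]

theorem lst_eq {w : List A} (h : c ∉ w) : lst c w = w := by
  cases w with
  | nil => rfl
  | cons a w =>
    simp only [List.mem_cons, not_or] at h
    simp [lst, h.2, Ne.symm h.1]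

theorem blocks_lst (w : List A) : (blocks c w).flatMap (· ++ [c]) ++ lst c w = w := by
  induction w with
  | nil => rfl
  | cons a w ih =>
    by_cases hw : c ∈ w
    · obtain ⟨bs, hbs⟩ := blocks_head hw
      by_cases ha : a = c
      · simp only [blocks, ha, if_true, lst, hw, List.flatMap_cons]
        simp [ih]
      · simp only [blocks, ha, if_false, lst, hw, hbs, if_true]
        rw [hbs] at ih
        simp only [List.flatMap_cons] at ih ⊢
        simpa using ih
    · have hb := blocks_nil.2 hw
      by_cases ha : a = c
      · simp [blocks, lst, ha, hw, hb]
      · simp [blocks, lst, ha, hw, hb]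

variable {S : Set A}

theorem D_noc (c : A) : D S (fun w => c ∉ w) := by
  refine (D.untl (D.letter c) D.top).not.of_iff fun w => ?_
  induction w with
  | nil => simp [Un_nil, Un_cons]
  | cons a w ih =>
    simp only [Un_nil, Un_cons, true_and, not_or, List.mem_cons, List.head?_cons, Option.some.injEq]
    rw [ih, eq_comm]

theorem D_tw {K : List A → Prop} (h : D (S \ {c}) K) : D S (fun w => K (tw c w)) := by
  induction h with
  | top => exact D.top
  | letter a =>
    by_cases ha : a = c
    · refine (D.const False).of_iff fun w => ?_
      cases w with
      | nil => simp [tw]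
      | cons b w => by_cases hb : b = c <;> simp [tw, hb, ha]
    · refine (D.letter a).of_iff fun w => ?_
      cases w with
      | nil => simp [tw]
      | cons b w =>
        by_cases hb : b = c
        · simp [tw, hb, Ne.symm ha]
        · simp [tw, hb]
  | and _ _ h1 h2 => exact h1.and h2
  | not _ h1 => exact h1.not
  | @next P _ h1 =>
    refine ((D.letter c).not.and h1.next).of_iff fun w => ?_
    cases w with
    | nil => simp [tw, Nx_nil, Nx_cons]
    | cons b w => by_cases hb : b = c <;> simp [tw, hb, Nx_nil, Nx_cons]
  | @untl P P' _ _ h1 h2 =>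
    refine (D.untl h1 ((D.letter c).not.and h2)).of_iff fun w => ?_
    induction w with
    | nil => simp [tw, Un_nil, Un_cons]
    | cons b w ih =>
      by_cases hb : b = c
      · simp [tw, hb, Un_nil, Un_cons]
      · simp [tw, hb, Un_nil, Un_cons, ih]
  | congr _ e h1 => exact h1.congr fun w hw => e _ (tw_mem hw)

theorem D_aft {K : List A → Prop} (h : D S K) : D S (fun w => c ∈ w ∧ K (aft c w)) := by
  refine (D.untl ((D.letter c).and h.next) (D.letter c).not).of_iff fun w => ?_
  induction w with
  | nil => simp [Un_nil, Un_cons]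
  | cons b w ih =>
    by_cases hb : b = c
    · simp [aft, hb, Un_nil, Un_cons, Nx_nil, Nx_cons]
    · simp [aft, hb, Un_nil, Un_cons, Nx_nil, Nx_cons, ih, Ne.symm hb]

theorem D_lst {K : List A → Prop} (h : D (S \ {c}) K) : D S (fun w => K (lst c w)) := by
  have h0 : D S (fun w => c ∉ w ∧ K w) := by
    refine ((D_noc c).and (D_tw h)).of_iff fun w => ?_
    constructor
    · rintro ⟨h1, h2⟩; rw [tw_eq h1] at h2; exact ⟨h1, h2⟩
    · rintro ⟨h1, h2⟩; rw [tw_eq h1]; exact ⟨h1, h2⟩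
  have h1 : D S (fun w => c ∈ w ∧ K (lst c w)) := by
    refine (D.untl ((D.letter c).and h0.next) D.top).of_iff fun w => ?_
    induction w with
    | nil => simp [Un_nil, Un_cons]
    | cons b w ih =>
      by_cases hw : c ∈ w
      · simp [Un_nil, Un_cons, Nx_nil, Nx_cons, ih, lst, hw]
      · by_cases hb : b = c
        · simp [Un_cons, Nx_cons, ih, lst, hw, hb]
        · simp [Un_cons, Nx_cons, ih, lst, hw, hb, Ne.symm hb]
  refine (h0.or h1).of_iff fun w => ?_
  by_cases hw : c ∈ w
  · simp [hw]
  · simp [hw, lst_eq hw]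

theorem D_blocks {T : Type} (β : List A → T)
    (hβ : ∀ t, D (S \ {c}) (fun u => β u = t)) {K : List T → Prop} (h : D Set.univ K) :
    D S (fun w => K ((blocks c w).map β)) := by
  induction h with
  | top => exact D.top
  | letter t =>
    refine ((D_noc c).not.and (D_tw (hβ t))).of_iff fun w => ?_
    by_cases hw : c ∈ w
    · obtain ⟨bs, hbs⟩ := blocks_head hw
      simp [hw, hbs]
    · simp [hw, blocks_nil.2 hw]
  | and _ _ h1 h2 => exact h1.and h2
  | not _ h1 => exact h1.not
  | @next P _ h1 =>
    refine (D.untl ((D.letter c).and h1.next) (D.letter c).not).of_iff fun w => ?_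
    induction w with
    | nil => simp [Un_nil, Un_cons, Nx_nil, Nx_cons, blocks]
    | cons b w ih =>
      by_cases hb : b = c
      · simp [blocks, hb, Un_nil, Un_cons, Nx_nil, Nx_cons]
      · cases hbl : blocks c w <;> simp_all [blocks, Un_nil, Un_cons, Nx_nil, Nx_cons]
  | @untl P P' _ _ h1 h2 =>
    have key : ∀ w, Un (fun w => w.head? = some c ∧ Nx (fun w => P ((blocks c w).map β)) w)
        (fun w => ¬ w.head? = some c ∨ Nx (fun w => P' ((blocks c w).map β)) w) w ↔
        Nx (Un P P') ((blocks c w).map β) := by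
      intro w
      induction w with
      | nil => simp [Un_nil, Un_cons, Nx_nil, Nx_cons, blocks]
      | cons b w ih =>
        by_cases hb : b = c
        · simp only [Un_nil, Un_cons, Nx_nil, Nx_cons, blocks, hb, ih, List.head?_cons, if_true, List.map_cons]
          cases hbl : (blocks c w).map β <;> simp [Un_nil, Un_cons, Nx_nil, Nx_cons]
        · cases hbl : blocks c w <;> simp_all [blocks, Un_nil, Un_cons, Nx_nil, Nx_cons]
    refine (h1.or (h2.and (D.untl ((D.letter c).and h1.next)
      ((D.letter c).not.or h2.next)))).of_iff fun w => ?_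
    rw [key]
    cases hbl : (blocks c w).map β <;> simp [Un_nil, Un_cons, Nx_nil, Nx_cons]
  | congr _ e h1 => exact h1.of_iff fun w => e _ (by simp)

end cut

def run {A Q : Type} (f : A → Q → Q) (q : Q) (w : List A) : Q := w.foldl (fun q a => f a q) q

theorem run_append {A Q : Type} (f : A → Q → Q) (q : Q) (u v : List A) :
    run f q (u ++ v) = run f (run f q u) v := by simp [run]

theorem run_cons {A Q : Type} (f : A → Q → Q) (q : Q) (a : A) (v : List A) :
    run f q (a :: v) = run f (f a q) v := by simp [run]

def Aper {A Q : Type} (f : A → Q → Q) : Prop :=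
  ∀ w, ∃ n, ∀ q, (fun q => run f q w)^[n + 1] q = (fun q => run f q w)^[n] q

theorem main (n : ℕ) : ∀ (Q : Type) [Finite Q], Nat.card Q = n → ∀ (A : Type) [Finite A]
    (f : A → Q → Q), Aper f → ∀ (m : ℕ) (S : Set A), S.ncard = m → ∀ q q',
    D S (fun w => run f q w = q') := by
  classical
  induction n using Nat.strong_induction_on with
  | _ n ihn =>
  intro Q _ hQ A _ f hf m
  induction m using Nat.strong_induction_on with
  | _ m ihm =>
  intro S hS
  by_cases hinj : ∀ a ∈ S, Function.Injective (f a)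
  · have hid : ∀ a ∈ S, ∀ q, f a q = q := by
      intro a ha q
      obtain ⟨n, hn⟩ := hf [a]
      have := hn q
      simp only [run, List.foldl_cons, List.foldl_nil, Function.iterate_succ_apply] at this
      exact (hinj a ha).iterate n this
    intro q q'
    refine (D.const (q = q')).congr fun w hw => ?_
    have : run f q w = q := by
      induction w with
      | nil => rfl
      | cons a w ih =>
        rw [run_cons, hid a (hw a (by simp))]
        exact ih fun x hx => hw x (by simp [hx])
    rw [this]
  push Not at hinj
  obtain ⟨c, hcS, hc⟩ := hinj
  have ih2 := ihm _ (by rw [← hS]; exact Set.ncard_sdiff_singleton_lt_of_mem hcS) (S \ {c}) rfl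
  let Q' : Type := Set.range (f c)
  have hcard : Nat.card Q' < n := by
    rw [← hQ]
    refine lt_of_le_of_ne (Finite.card_subtype_le _) fun h => hc ?_
    have : Set.range (f c) = Set.univ := by
      apply Set.eq_of_subset_of_ncard_le (Set.subset_univ _)
      rw [Set.ncard_univ, ← h]; rfl
    exact Finite.injective_iff_surjective.2 (Set.range_eq_univ.1 this)
  let T : Type := {t : Q' → Q' // ∃ u, ∀ q : Q', ((t q : Q') : Q) = run f q (u ++ [c])}
  let fT : T → Q' → Q' := fun t => t.1
  let β : List A → T := fun u =>
    ⟨fun q => ⟨run f q (u ++ [c]), by rw [run_append]; exact ⟨_, rfl⟩⟩, u, fun q => rfl⟩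
  have hword : ∀ τ : List T, ∃ u, ∀ q : Q', ((run fT q τ : Q') : Q) = run f q u := by
    intro τ
    induction τ with
    | nil => exact ⟨[], fun q => rfl⟩
    | cons t τ ih =>
      obtain ⟨u, hu⟩ := ih
      obtain ⟨u', hu'⟩ := t.2
      refine ⟨(u' ++ [c]) ++ u, fun q => ?_⟩
      rw [run_cons, hu, run_append]
      congr 1
      exact hu' q
  have hT : Aper fT := by
    intro τ
    obtain ⟨u, hu⟩ := hword τ
    obtain ⟨N, hN⟩ := hf u
    refine ⟨N, fun q => ?_⟩
    have hs : Function.Semiconj (Subtype.val : Q' → Q) (fun q => run fT q τ)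
      (fun q => run f q u) := fun q => hu q
    apply Subtype.ext
    rw [(hs.iterate_right (N + 1)).eq, (hs.iterate_right N).eq]
    exact hN _
  have ih1 := ihn _ hcard Q' rfl T fT hT _ Set.univ rfl
  have hβ : ∀ t, D (S \ {c}) (fun u => β u = t) := by
    intro t
    have : D (S \ {c}) (fun u => ∀ q : Q', ∃ q1 : Q, run f q u = q1 ∧ f c q1 = t.1 q) :=
      D.all fun q => D.ex fun q1 => (ih2 _ _).and (D.const _)
    refine this.of_iff fun u => ?_
    rw [Subtype.ext_iff, funext_iff]
    refine forall_congr' fun q => ?_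
    rw [Subtype.ext_iff]
    simp [β, run]
  have hblk : ∀ (bs : List (List A)) (q : Q'),
      ((run fT q (bs.map β) : Q') : Q) = run f q (bs.flatMap (· ++ [c])) := by
    intro bs
    induction bs with
    | nil => intro q; rfl
    | cons b bs ih =>
      intro q
      rw [List.map_cons, run_cons, ih, List.flatMap_cons, run_append]
  intro q q'
  have hG : ∀ p : Q', D S (fun r => ∃ q3 : Q', run fT p ((blocks c r).map β) = q3 ∧
      run f q3 (lst c r) = q') := fun p =>
    D.ex fun q3 => (D_blocks β hβ (ih1 p q3)).and (D_lst (ih2 q3 q'))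
  have hG' : ∀ (p : Q') (r : List A), (∃ q3 : Q', run fT p ((blocks c r).map β) = q3 ∧
      run f q3 (lst c r) = q') ↔ run f p r = q' := by
    intro p r
    conv_rhs => rw [← blocks_lst (c := c) r, run_append, ← hblk]
    simp
  have : D S (fun w => (c ∉ w ∧ run f q (tw c w) = q') ∨ (∃ q1 : Q, run f q (tw c w) = q1 ∧
      c ∈ w ∧ run f (f c q1) (aft c w) = q')) :=
    ((D_noc c).and (D_tw (ih2 q q'))).or (D.ex fun q1 => (D_tw (ih2 q q1)).and
      (D_aft ((hG ⟨f c q1, q1, rfl⟩).of_iff (hG' _))))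
  refine this.of_iff fun w => ?_
  by_cases hw : c ∈ w
  · conv_rhs => rw [← tw_aft hw, run_append, run_cons]
    simp [hw]
  · simp [hw, tw_eq hw]

end Kamp

namespace Kamp

section types
variable {A B : Type}

def Ty (A : Type) : ℕ → Type
  | 0 => Unit
  | k + 1 => Set (Ty A k × A × Ty A k)

instance Ty.finite [Finite A] : ∀ k, Finite (Ty A k)
  | 0 => inferInstanceAs (Finite Unit)
  | k + 1 => by
    have : Finite (Ty A k) := Ty.finite k
    exact inferInstanceAs (Finite (Set (Ty A k × A × Ty A k)))

/-- A type of positive rank as a set. -/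
def Ty.s {k : ℕ} (t : Ty A (k + 1)) : Set (Ty A k × A × Ty A k) := t

def tp : ∀ k, List A → Ty A k
  | 0, _ => ()
  | k + 1, w => {p : Ty A k × A × Ty A k | ∃ u a v, w = u ++ a :: v ∧ p = (tp k u, a, tp k v)}

def Sim (k : ℕ) (w w' : List A) : Prop :=
  ∀ u a v, w = u ++ a :: v → ∃ u' v', w' = u' ++ a :: v' ∧ tp k u = tp k u' ∧ tp k v = tp k v'

theorem tp_succ {k : ℕ} {w w' : List A} :
    tp (k + 1) w = tp (k + 1) w' ↔ Sim k w w' ∧ Sim k w' w := by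
  constructor
  · have key : ∀ w w' : List A, tp (k + 1) w = tp (k + 1) w' → Sim k w w' := by
      intro w w' h u a v e
      have : ((tp k u, a, tp k v) : Ty A k × A × Ty A k) ∈
          (tp (k + 1) w).s := ⟨u, a, v, e, rfl⟩
      rw [h] at this
      obtain ⟨u', a', v', e', h'⟩ := this
      simp only [Prod.mk.injEq] at h'
      obtain ⟨h1, rfl, h2⟩ := h'
      exact ⟨u', v', e', h1, h2⟩
    exact fun h => ⟨key _ _ h, key _ _ h.symm⟩
  · rintro ⟨h1, h2⟩
    have key : ∀ w w' : List A, Sim k w w' → ∀ p : Ty A k × A × Ty A k,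
        p ∈ (tp (k + 1) w).s →
        p ∈ (tp (k + 1) w').s := by
      rintro w w' h p ⟨u, a, v, e, rfl⟩
      obtain ⟨u', v', e', h1, h2⟩ := h u a v e
      exact ⟨u', a, v', e', by rw [h1, h2]⟩
    exact Set.Subset.antisymm (fun p => key _ _ h1 p) (fun p => key _ _ h2 p)

theorem tp_mono_succ : ∀ {k : ℕ} {w w' : List A}, tp (k + 1) w = tp (k + 1) w' → tp k w = tp k w'
  | 0, _, _, _ => rfl
  | k + 1, w, w', h => by
    rw [tp_succ] at h ⊢
    have key : ∀ w w' : List A, Sim (k + 1) w w' → Sim k w w' := by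
      intro w w' h u a v e
      obtain ⟨u', v', e', h1, h2⟩ := h u a v e
      exact ⟨u', v', e', tp_mono_succ h1, tp_mono_succ h2⟩
    exact ⟨key _ _ h.1, key _ _ h.2⟩

theorem tp_mono {k l : ℕ} (hkl : k ≤ l) {w w' : List A} (h : tp l w = tp l w') :
    tp k w = tp k w' := by
  induction hkl with
  | refl => exact h
  | step _ ih => exact ih (tp_mono_succ h)

theorem tp_append : ∀ {k : ℕ} {u u' v v' : List A}, tp k u = tp k u' → tp k v = tp k v' →
    tp k (u ++ v) = tp k (u' ++ v')
  | 0, _, _, _, _, _, _ => rfl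
  | k + 1, u, u', v, v', hu, hv => by
    have key : ∀ u u' v v' : List A, tp (k + 1) u = tp (k + 1) u' → tp (k + 1) v = tp (k + 1) v' →
        Sim k (u ++ v) (u' ++ v') := by
      intro u u' v v' hu hv x a y e
      rcases List.append_eq_append_iff.1 e with ⟨z, rfl, hz⟩ | ⟨z, hz, hz'⟩
      · obtain ⟨p, q, e', h1, h2⟩ := (tp_succ.1 hv).1 _ _ _ hz
        exact ⟨u' ++ p, q, by simp [e'], tp_append (tp_mono_succ hu) h1, h2⟩
      · cases z with
        | nil =>
          simp only [List.append_nil] at hz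
          simp only [List.nil_append] at hz'
          obtain ⟨p, q, e', h1, h2⟩ := (tp_succ.1 hv).1 [] a y hz'.symm
          refine ⟨u' ++ p, q, by simp [e'], ?_, h2⟩
          have := tp_append (tp_mono_succ hu) h1
          simpa [hz] using this
        | cons b z =>
          simp only [List.cons_append, List.cons.injEq] at hz'
          obtain ⟨rfl, rfl⟩ := hz'
          obtain ⟨p, q, e', h1, h2⟩ := (tp_succ.1 hu).1 _ _ _ hz
          exact ⟨p, q ++ v', by simp [e'], h1, tp_append h2 (tp_mono_succ hv)⟩
    exact tp_succ.2 ⟨key _ _ _ _ hu hv, key _ _ _ _ hu.symm hv.symm⟩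

theorem tp_map (g : A → B) : ∀ {k : ℕ} {u u' : List A}, tp k u = tp k u' →
    tp k (u.map g) = tp k (u'.map g)
  | 0, _, _, _ => rfl
  | k + 1, u, u', h => by
    have key : ∀ u u' : List A, tp (k + 1) u = tp (k + 1) u' → Sim k (u.map g) (u'.map g) := by
      intro u u' h x b y e
      obtain ⟨x', y1, rfl, rfl, hy⟩ := List.map_eq_append_iff.1 e
      obtain ⟨a, y', rfl, rfl, rfl⟩ := List.map_eq_cons_iff.1 hy
      obtain ⟨p, q, rfl, h1, h2⟩ := (tp_succ.1 h).1 _ _ _ rfl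
      exact ⟨p.map g, q.map g, by simp, tp_map g h1, tp_map g h2⟩
    exact tp_succ.2 ⟨key _ _ h, key _ _ h.symm⟩

def pw (w : List A) : ℕ → List A
  | 0 => []
  | n + 1 => w ++ pw w n

theorem pw_add (w : List A) (m n : ℕ) : pw w (m + n) = pw w m ++ pw w n := by
  induction m with
  | zero => simp [pw]
  | succ m ih => rw [Nat.succ_add]; simp [pw, ih]

theorem pw_split (w : List A) : ∀ (n : ℕ) (u : List A) (a : A) (v : List A),
    pw w n = u ++ a :: v → ∃ i j u' v', n = i + j + 1 ∧ w = u' ++ a :: v' ∧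
      u = pw w i ++ u' ∧ v = v' ++ pw w j := by
  intro n
  induction n with
  | zero => intro u a v h; simp [pw] at h
  | succ n ih =>
    intro u a v h
    simp only [pw] at h
    have second : ∀ z, u = w ++ z → pw w n = z ++ a :: v → ∃ i j u' v', n + 1 = i + j + 1 ∧
        w = u' ++ a :: v' ∧ u = pw w i ++ u' ∧ v = v' ++ pw w j := by
      intro z hz h'
      obtain ⟨i, j, u', v', h1, h2, h3, h4⟩ := ih _ _ _ h'
      exact ⟨i + 1, j, u', v', by omega, h2, by simp [hz, h3, pw], h4⟩
    rcases List.append_eq_append_iff.1 h with ⟨z, hz, hz'⟩ | ⟨z, hz, hz'⟩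
    · exact second z hz hz'
    · cases z with
      | nil => exact second [] (by simpa using hz.symm) (by simpa using hz'.symm)
      | cons b z =>
        simp only [List.cons_append, List.cons.injEq] at hz'
        obtain ⟨rfl, rfl⟩ := hz'
        exact ⟨0, n, u, z, by omega, hz, by simp [pw], rfl⟩

theorem tp_pw (w : List A) : ∀ k, ∃ N, ∀ n, N ≤ n → tp k (pw w n) = tp k (pw w (n + 1))
  | 0 => ⟨0, fun _ _ => rfl⟩
  | k + 1 => by
    obtain ⟨N, hN⟩ := tp_pw w k
    refine ⟨2 * N + 2, fun n hn => tp_succ.2 ⟨?_, ?_⟩⟩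
    · intro u a v e
      obtain ⟨i, j, u', v', h1, h2, rfl, rfl⟩ := pw_split w n u a v e
      by_cases hi : N ≤ i
      · refine ⟨pw w (i + 1) ++ u', v' ++ pw w j, ?_, tp_append (hN i hi) rfl, rfl⟩
        rw [show n + 1 = (i + 1) + (1 + j) by omega, pw_add, pw_add w 1 j]
        conv_lhs => rw [show pw w 1 = u' ++ a :: v' by simpa [pw] using h2]
        simp
      · refine ⟨pw w i ++ u', v' ++ pw w (j + 1), ?_, rfl, tp_append rfl (hN j (by omega))⟩
        rw [show n + 1 = i + (1 + (j + 1)) by omega, pw_add, pw_add w 1 (j + 1)]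
        conv_lhs => rw [show pw w 1 = u' ++ a :: v' by simpa [pw] using h2]
        simp
    · intro u a v e
      obtain ⟨i, j, u', v', h1, h2, rfl, rfl⟩ := pw_split w (n + 1) u a v e
      by_cases hi : N + 1 ≤ i
      · obtain ⟨i, rfl⟩ : ∃ i', i = i' + 1 := ⟨i - 1, by omega⟩
        refine ⟨pw w i ++ u', v' ++ pw w j, ?_, tp_append (hN i (by omega)).symm rfl, rfl⟩
        rw [show n = i + (1 + j) by omega, pw_add, pw_add w 1 j]
        conv_lhs => rw [show pw w 1 = u' ++ a :: v' by simpa [pw] using h2]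
        simp
      · obtain ⟨j, rfl⟩ : ∃ j', j = j' + 1 := ⟨j - 1, by omega⟩
        refine ⟨pw w i ++ u', v' ++ pw w j, ?_, rfl, tp_append rfl (hN j (by omega)).symm⟩
        rw [show n = i + (1 + j) by omega, pw_add, pw_add w 1 j]
        conv_lhs => rw [show pw w 1 = u' ++ a :: v' by simpa [pw] using h2]
        simp

theorem D_tp [Finite A] (k : ℕ) (τ : Ty A k) : D Set.univ (fun w : List A => tp k w = τ) := by
  classical
  let Q : Type := Set.range (tp k : List A → Ty A k)
  let mk : List A → Q := fun w => ⟨tp k w, w, rfl⟩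
  have hmk : ∀ q : Q, ∃ w, mk w = q := by rintro ⟨_, w, rfl⟩; exact ⟨w, rfl⟩
  choose rep hrep using hmk
  let f : A → Q → Q := fun a q => mk (rep q ++ [a])
  have hf : ∀ a w, f a (mk w) = mk (w ++ [a]) := by
    intro a w
    have := hrep (mk w)
    exact Subtype.ext (tp_append (congrArg Subtype.val this) rfl)
  have hrun : ∀ w u, run f (mk u) w = mk (u ++ w) := by
    intro w
    induction w with
    | nil => intro u; simp [run]
    | cons a w ih => intro u; rw [run_cons, hf, ih]; simp
  have hit : ∀ w n u, (fun q => run f q w)^[n] (mk u) = mk (u ++ pw w n) := by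
    intro w n
    induction n with
    | zero => intro u; simp [pw]
    | succ n ih => intro u; rw [Function.iterate_succ_apply, hrun, ih]; simp [pw]
  have hap : Aper f := by
    intro w
    obtain ⟨N, hN⟩ := tp_pw w k
    refine ⟨N, fun q => ?_⟩
    rw [← hrep q, hit, hit]
    exact Subtype.ext (tp_append rfl (hN N le_rfl).symm)
  have hm := main _ Q rfl A f hap _ Set.univ rfl (mk [])
  by_cases hτ : ∃ w, tp k w = τ
  · obtain ⟨w0, rfl⟩ := hτ
    refine (hm (mk w0)).of_iff fun w => ?_
    rw [hrun, Subtype.ext_iff]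
    rfl
  · exact (D.const False).of_iff fun w => ⟨False.elim, fun h => hτ ⟨w, h⟩⟩

end types

/-- Letter at a time point. -/
def lt (N : ℕ) (M : TModel) (t : ℕ) : Fin N → Prop := fun p => M.V p t

/-- The word from position `n` on. -/
def wd (N : ℕ) (M : TModel) (n : ℕ) : List (Fin N → Prop) :=
  (List.range' n (M.len + 1 - n)).map (lt N M)

theorem wd_cons {N : ℕ} {M : TModel} {n : ℕ} (h : n ≤ M.len) :
    wd N M n = lt N M n :: wd N M (n + 1) := by
  unfold wd
  rw [show M.len + 1 - n = (M.len + 1 - (n + 1)) + 1 by omega, List.range'_succ]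
  simp

theorem wd_end {N : ℕ} {M : TModel} : wd N M (M.len + 1) = [] := by simp [wd]

def Ex (R : TModel → ℕ → Prop) : Prop :=
  ∃ φ : LTL, ∀ M : TModel, ∀ n ≤ M.len, LTL.sat M n φ ↔ R M n

theorem Ex.not {R} (h : Ex R) : Ex (fun M n => ¬ R M n) := by
  obtain ⟨φ, h⟩ := h
  exact ⟨.not φ, fun M n hn => by simp [LTL.sat, h M n hn]⟩

theorem Ex.and {R R'} (h : Ex R) (h' : Ex R') : Ex (fun M n => R M n ∧ R' M n) := by
  obtain ⟨φ, h⟩ := h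
  obtain ⟨φ', h'⟩ := h'
  exact ⟨.and φ φ', fun M n hn => by simp [LTL.sat, h M n hn, h' M n hn]⟩

theorem Ex.top : Ex (fun _ _ => True) := ⟨.top, fun _ _ _ => by simp [LTL.sat]⟩

theorem Ex.congr {R R'} (h : Ex R) (e : ∀ M n, n ≤ M.len → (R M n ↔ R' M n)) : Ex R' := by
  obtain ⟨φ, h⟩ := h
  exact ⟨φ, fun M n hn => (h M n hn).trans (e M n hn)⟩

theorem Ex.or {R R'} (h : Ex R) (h' : Ex R') : Ex (fun M n => R M n ∨ R' M n) :=
  (h.not.and h'.not).not.congr fun _ _ _ => by tauto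

theorem Ex.const (p : Prop) : Ex (fun _ _ => p) := by
  by_cases h : p
  · exact Ex.top.congr (by simp [h])
  · exact Ex.top.not.congr (by simp [h])

theorem Ex.next {R} (h : Ex R) : Ex (fun M n => n < M.len ∧ R M (n + 1)) := by
  obtain ⟨φ, h⟩ := h
  refine ⟨.next φ, fun M n hn => ?_⟩
  simp only [LTL.sat]
  exact and_congr_right fun hl => h M _ hl

theorem Ex.untl {R R'} (h : Ex R) (h' : Ex R') : Ex (fun M n => ∃ m, n < m ∧ m ≤ M.len ∧ R M m ∧
    ∀ k, n < k → k < m → R' M k) := by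
  obtain ⟨φ, h⟩ := h
  obtain ⟨φ', h'⟩ := h'
  refine ⟨.untl φ φ', fun M n hn => ?_⟩
  simp only [LTL.sat]
  refine exists_congr fun m => and_congr_right fun _ => and_congr_right fun hm => ?_
  refine and_congr (h M _ hm) ?_
  exact forall_congr' fun k => imp_congr_right fun _ => imp_congr_right fun hk =>
    h' M k (by omega)

theorem Ex.all_fin : ∀ (N : ℕ) (R : Fin N → TModel → ℕ → Prop), (∀ i, Ex (R i)) →
    Ex (fun M n => ∀ i, R i M n)
  | 0, R, _ => Ex.top.congr (by simp)
  | N + 1, R, h => ((h 0).and (Ex.all_fin N (fun i => R i.succ) fun i => h _)).congr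
      fun M n _ => by rw [Fin.forall_fin_succ]

theorem Un_wd {N : ℕ} {M : TModel} (P P' : List (Fin N → Prop) → Prop) (d : ℕ) : ∀ n,
    n + d = M.len + 1 → (Un P P' (wd N M n) ↔
      (∃ m, n ≤ m ∧ m ≤ M.len ∧ P (wd N M m) ∧ ∀ k, n ≤ k → k < m → P' (wd N M k)) ∨
      (P [] ∧ ∀ k, n ≤ k → k ≤ M.len → P' (wd N M k))) := by
  induction d with
  | zero =>
    intro n hn
    obtain rfl : n = M.len + 1 := by omega
    rw [wd_end, Un_nil]
    constructor
    · exact fun h => Or.inr ⟨h, fun k _ _ => by omega⟩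
    · rintro (⟨m, h1, h2, _⟩ | h)
      · omega
      · exact h.1
  | succ d ih =>
    intro n hn
    rw [wd_cons (by omega), Un_cons, ih (n + 1) (by omega), ← wd_cons (by omega)]
    constructor
    · rintro (h | ⟨h0, ⟨m, h1, h2, h3, h4⟩ | ⟨h1, h2⟩⟩)
      · exact Or.inl ⟨n, le_rfl, by omega, h, fun k _ _ => by omega⟩
      · refine Or.inl ⟨m, by omega, h2, h3, fun k hk hk' => ?_⟩
        rcases hk.eq_or_lt with rfl | hk
        · exact h0
        · exact h4 k hk hk'
      · refine Or.inr ⟨h1, fun k hk hk' => ?_⟩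
        rcases hk.eq_or_lt with rfl | hk
        · exact h0
        · exact h2 k hk hk'
    · rintro (⟨m, h1, h2, h3, h4⟩ | ⟨h1, h2⟩)
      · rcases h1.eq_or_lt with rfl | h1
        · exact Or.inl h3
        · exact Or.inr ⟨h4 n le_rfl h1, Or.inl ⟨m, h1, h2, h3, fun k hk => h4 k (by omega)⟩⟩
      · exact Or.inr ⟨h2 n le_rfl (by omega), Or.inr ⟨h1, fun k hk => h2 k (by omega)⟩⟩

theorem D_ltl {N : ℕ} {P : List (Fin N → Prop) → Prop} (h : D Set.univ P) :
    Ex (fun M n => P (wd N M n)) := by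
  induction h with
  | top => exact Ex.top
  | letter a =>
    have : Ex (fun M n => ∀ i : Fin N, M.V i n ↔ a i) := by
      apply Ex.all_fin
      intro i
      have h0 : Ex (fun M n => M.V i n) := ⟨.var i, fun M n _ => by simp [LTL.sat]⟩
      by_cases ha : a i
      · exact h0.congr (by simp [ha])
      · exact h0.not.congr (by simp [ha])
    refine this.congr fun M n hn => ?_
    rw [wd_cons hn]
    simp only [List.head?_cons, Option.some.injEq, funext_iff, lt, eq_iff_iff]
  | and _ _ h1 h2 => exact h1.and h2
  | not _ h1 => exact h1.not
  | @next P _ h1 =>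
    refine (h1.next.or ((Ex.top.next.not).and (Ex.const (P [])))).congr fun M n hn => ?_
    rw [wd_cons hn, Nx_cons]
    rcases hn.eq_or_lt with rfl | hn
    · simp [wd_end]
    · simp [hn]
  | @untl P P' _ _ h1 h2 =>
    have hall : Ex (fun M n => P [] ∧ P' (wd N M n) ∧ ¬ ∃ m, n < m ∧ m ≤ M.len ∧
        (¬ P' (wd N M m)) ∧ ∀ k, n < k → k < m → True) :=
      (Ex.const _).and (h2.and (h2.not.untl Ex.top).not)
    refine ((h1.or (h2.and (h1.untl h2))).or hall).congr fun M n hn => ?_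
    rw [Un_wd P P' (M.len + 1 - n) n (by omega)]
    refine or_congr ?_ (and_congr_right fun _ => ?_)
    · constructor
      · rintro (h | ⟨h0, m, h1, h2, h3, h4⟩)
        · exact ⟨n, le_rfl, by omega, h, fun k _ _ => by omega⟩
        · refine ⟨m, by omega, h2, h3, fun k hk hk' => ?_⟩
          rcases hk.eq_or_lt with rfl | hk
          · exact h0
          · exact h4 k hk hk'
      · rintro ⟨m, h1, h2, h3, h4⟩
        rcases h1.eq_or_lt with rfl | h1
        · exact Or.inl h3
        · exact Or.inr ⟨h4 n le_rfl h1, m, h1, h2, h3, fun k hk => h4 k (by omega)⟩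
    · constructor
      · rintro ⟨h0, h1⟩ k hk hk'
        rcases hk.eq_or_lt with rfl | hk
        · exact h0
        · by_contra hc
          exact h1 ⟨k, hk, hk', hc, fun _ _ _ => trivial⟩
      · intro h
        refine ⟨h n le_rfl hn, ?_⟩
        rintro ⟨m, h1, h2, h3, _⟩
        exact h3 (h m h1.le h2)
  | congr _ e h1 => exact h1.congr fun M n hn => e _ (by simp)

end Kamp

namespace Kamp

open FirstOrder.Language

section split
variable {B : Type}

theorem range_split (L : ℕ → B) {n t : ℕ} (h : t < n) : (List.range n).map L =
    (List.range t).map L ++ L t :: (List.range' (t + 1) (n - t - 1)).map L := by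
  apply List.ext_getElem
  · simp; omega
  · intro i h1 h2
    simp only [List.getElem_map, List.getElem_range, List.getElem_append, List.length_map,
      List.length_range, List.getElem_cons, List.getElem_range']
    split
    · rfl
    · split
      · congr 1; omega
      · congr 1; omega

theorem range_split' (L : ℕ → B) {n : ℕ} {u : List B} {a : B} {b : List B}
    (h : (List.range n).map L = u ++ a :: b) :
    u.length < n ∧ u = (List.range u.length).map L ∧ a = L u.length ∧
      b = (List.range' (u.length + 1) (n - u.length - 1)).map L := by
  have hl : u.length < n := by
    have := congrArg List.length h
    simp at this
    omega
  have h2 := range_split L hl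
  rw [h] at h2
  obtain ⟨h3, h4⟩ := List.append_inj h2 (by simp)
  simp only [List.cons.injEq] at h4
  exact ⟨hl, h3, h4.1, h4.2⟩

theorem tp_one {w w' : List B} (h : tp 1 w = tp 1 w') {a : B} (ha : a ∈ w) : a ∈ w' := by
  obtain ⟨u, v, rfl⟩ := List.append_of_mem ha
  obtain ⟨u', v', rfl, _⟩ := (tp_succ.1 h).1 _ _ _ rfl
  simp

end split

/-- Marked letters. -/
def ml (N : ℕ) (M : TModel) {α : Type} (s : α → ℕ) (t : ℕ) : (Fin N → Prop) × (α → Prop) :=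
  (lt N M t, fun i => s i = t)

/-- Marked word. -/
def mwd (N : ℕ) (M : TModel) {α : Type} (s : α → ℕ) : List ((Fin N → Prop) × (α → Prop)) :=
  (List.range (M.len + 1)).map (ml N M s)

theorem mwd_mono {N N' : ℕ} (h : N ≤ N') {k k' : ℕ} (hk : k ≤ k') {α : Type} {M M' : TModel}
    {s s' : α → ℕ} (e : tp k' (mwd N' M s) = tp k' (mwd N' M' s')) :
    tp k (mwd N M s) = tp k (mwd N M' s') := by
  have := tp_mono hk (tp_map (fun x : (Fin N' → Prop) × (α → Prop) =>
    ((fun p : Fin N => x.1 (Fin.castLE h p)), x.2)) e)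
  simp only [mwd, List.map_map] at this
  exact this

def Det {α : Type} (R : TModel → (α → ℕ) → Prop) : Prop :=
  ∃ N k, ∀ (M M' : TModel) (s s' : α → ℕ), (∀ i, s i ≤ M.len) → (∀ i, s' i ≤ M'.len) →
    tp k (mwd N M s) = tp k (mwd N M' s') → R M s → R M' s'

theorem det_eq {α : Type} (i j : α) : Det (fun _ s => s i = s j) := by
  refine ⟨0, 1, fun M M' s s' hs hs' e h => ?_⟩
  have h1 : ml 0 M s (s i) ∈ mwd 0 M s :=
    List.mem_map.2 ⟨s i, by have := hs i; simp; omega, rfl⟩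
  obtain ⟨t, _, h2⟩ := List.mem_map.1 (tp_one e h1)
  have h3 := congrArg Prod.snd h2
  have hi : s' i = t := (congrFun h3 i).mpr rfl
  have hj : s' j = t := (congrFun h3 j).mpr h.symm
  exact hi.trans hj.symm

theorem det_pred {α : Type} (p : ℕ) (i : α) : Det (fun M s => M.V p (s i)) := by
  refine ⟨p + 1, 1, fun M M' s s' hs hs' e h => ?_⟩
  have h1 : ml (p + 1) M s (s i) ∈ mwd (p + 1) M s :=
    List.mem_map.2 ⟨s i, by have := hs i; simp; omega, rfl⟩
  obtain ⟨t, _, h2⟩ := List.mem_map.1 (tp_one e h1)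
  have hi : s' i = t := (congrFun (congrArg Prod.snd h2) i).mpr rfl
  have hp := congrFun (congrArg Prod.fst h2) (Fin.last p)
  show M'.V p (s' i)
  rw [hi]
  exact hp.mpr h

theorem det_lt {α : Type} (i j : α) : Det (fun _ s => s i < s j) := by
  refine ⟨0, 2, fun M M' s s' hs hs' e h => ?_⟩
  have hj := hs j
  obtain ⟨u', b', e', _, h2⟩ := (tp_succ.1 e).1 _ _ _
    (range_split (ml 0 M s) (show s i < M.len + 1 by omega))
  obtain ⟨hl, h3, h4, h5⟩ := range_split' _ e'
  have h1 : ml 0 M s (s j) ∈ (List.range' (s i + 1) (M.len + 1 - s i - 1)).map (ml 0 M s) :=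
    List.mem_map.2 ⟨s j, by simp [List.mem_range']; exact ⟨s j - (s i + 1), by omega, by omega⟩, rfl⟩
  have h6 := tp_one h2 h1
  rw [h5] at h6
  obtain ⟨t, ht, h7⟩ := List.mem_map.1 h6
  have hi' : s' i = u'.length := (congrFun (congrArg Prod.snd h4) i).mp rfl
  have hj' : s' j = t := (congrFun (congrArg Prod.snd h7) j).mpr rfl
  have := List.left_le_of_mem_range' ht
  show s' i < s' j
  omega

/-- Extend marks. -/
def addm {N n : ℕ} (q : Prop) (x : (Fin N → Prop) × (Fin 1 ⊕ Fin n → Prop)) :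
    (Fin N → Prop) × (Fin 1 ⊕ Fin (n + 1) → Prop) :=
  (x.1, Sum.elim (fun i => x.2 (.inl i)) (Fin.snoc (α := fun _ => Prop) (fun i => x.2 (.inr i)) q))

def asg {m n : ℕ} (v : Fin 1 → Fin m) (xs : Fin n → Fin m) : Fin 1 ⊕ Fin n → ℕ :=
  fun i => (Sum.elim v xs i : Fin m)

theorem ml_snoc {N n : ℕ} {M : TModel} (v : Fin 1 → Fin (M.len + 1)) (xs : Fin n → Fin (M.len + 1))
    (x : Fin (M.len + 1)) (t : ℕ) (q : Prop) (hq : q ↔ (x : ℕ) = t) :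
    ml N M (asg v (Fin.snoc (α := fun _ => Fin (M.len + 1)) xs x)) t
      = addm q (ml N M (asg v xs) t) := by
  refine Prod.ext rfl (funext fun i => ?_)
  rcases i with i | i
  · rfl
  · refine Fin.lastCases ?_ (fun i => ?_) i
    · simp [ml, addm, asg, hq]
    · simp [ml, addm, asg]

theorem mwd_snoc {N n : ℕ} {M : TModel} (v : Fin 1 → Fin (M.len + 1)) (xs : Fin n → Fin (M.len + 1))
    (x : Fin (M.len + 1)) {u a b} (h : mwd N M (asg v xs) = u ++ a :: b) (hx : u.length = (x : ℕ)) :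
    mwd N M (asg v (Fin.snoc (α := fun _ => Fin (M.len + 1)) xs x)) =
      u.map (addm False) ++ addm True a :: b.map (addm False) := by
  obtain ⟨hl, h1, h2, h3⟩ := range_split' _ h
  rw [hx] at h1 h2 h3
  rw [mwd, range_split _ x.2, h1, h2, h3]
  simp only [List.map_map]
  congr 1
  · refine List.map_congr_left fun t ht => ?_
    have := List.mem_range.1 ht
    exact ml_snoc v xs x t False (by simp; omega)
  · congr 1
    · exact ml_snoc v xs x x True (by simp)
    · refine List.map_congr_left fun t ht => ?_
      have := List.left_le_of_mem_range' ht
      exact ml_snoc v xs x t False (by simp; omega)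

def Rz {n : ℕ} (φ : linLang.BoundedFormula (Fin 1) n) (M : TModel) (v : Fin 1 → Fin (M.len + 1))
    (xs : Fin n → Fin (M.len + 1)) : Prop :=
  letI := M.toStructure
  φ.Realize v xs

def DetF {n : ℕ} (φ : linLang.BoundedFormula (Fin 1) n) : Prop :=
  ∃ N k, ∀ (M M' : TModel) v xs v' xs',
    tp k (mwd N M (asg v xs)) = tp k (mwd N M' (asg v' xs')) → (Rz φ M v xs ↔ Rz φ M' v' xs')

theorem DetF.of {n : ℕ} {φ : linLang.BoundedFormula (Fin 1) n} {R} (h : Det R)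
    (e : ∀ M v xs, Rz φ M v xs ↔ R M (asg v xs)) : DetF φ := by
  obtain ⟨N, k, h⟩ := h
  have ha : ∀ (M : TModel) (v : Fin 1 → Fin (M.len + 1)) (xs : Fin n → Fin (M.len + 1)) i,
      asg v xs i ≤ M.len := fun M v xs i => by have := (Sum.elim v xs i).2; unfold asg; omega
  refine ⟨N, k, fun M M' v xs v' xs' he => ?_⟩
  rw [e, e]
  exact ⟨h M M' _ _ (ha _ _ _) (ha _ _ _) he, h M' M _ _ (ha _ _ _) (ha _ _ _) he.symm⟩

theorem term_var {n : ℕ} (t : linLang.Term (Fin 1 ⊕ Fin n)) : ∃ i, t = Term.var i := by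
  cases t with
  | var i => exact ⟨i, rfl⟩
  | func f ts => exact Empty.elim f

theorem detF {n : ℕ} (φ : linLang.BoundedFormula (Fin 1) n) : DetF φ := by
  induction φ with
  | falsum => exact ⟨0, 0, fun _ _ _ _ _ _ _ => Iff.rfl⟩
  | equal t₁ t₂ =>
    obtain ⟨i, rfl⟩ := term_var t₁
    obtain ⟨j, rfl⟩ := term_var t₂
    refine DetF.of (det_eq i j) fun M v xs => ?_
    exact Fin.ext_iff
  | @rel n l R ts =>
    choose i hi using fun m => term_var (ts m)
    obtain rfl : ts = fun m => Term.var (i m) := funext hi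
    match l, R with
    | 0, R => exact Empty.elim R
    | 1, R => exact DetF.of (det_pred R (i 0)) fun M v xs => Iff.rfl
    | 2, R => exact DetF.of (det_lt (i 0) (i 1)) fun M v xs => Iff.rfl
    | l + 3, R => exact Empty.elim R
  | imp φ ψ h1 h2 =>
    obtain ⟨N1, k1, h1⟩ := h1
    obtain ⟨N2, k2, h2⟩ := h2
    refine ⟨max N1 N2, max k1 k2, fun M M' v xs v' xs' e => ?_⟩
    exact imp_congr (h1 _ _ _ _ _ _ (mwd_mono (le_max_left _ _) (le_max_left _ _) e))
      (h2 _ _ _ _ _ _ (mwd_mono (le_max_right _ _) (le_max_right _ _) e))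
  | all φ h =>
    obtain ⟨N, k, h⟩ := h
    have key : ∀ (M M' : TModel) v xs v' xs',
        tp (k + 1) (mwd N M (asg v xs)) = tp (k + 1) (mwd N M' (asg v' xs')) →
        (∀ x, Rz φ M v (Fin.snoc (α := fun _ => Fin (M.len + 1)) xs x)) →
        (∀ x, Rz φ M' v' (Fin.snoc (α := fun _ => Fin (M'.len + 1)) xs' x)) := by
      intro M M' v xs v' xs' e hM x'
      have e1 := range_split (ml N M' (asg v' xs')) x'.2
      obtain ⟨u, b, e2, h1, h2⟩ := (tp_succ.1 e).2 _ _ _ e1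
      have hl := (range_split' _ e2).1
      refine (h _ _ _ _ _ _ ?_).1 (hM ⟨u.length, hl⟩)
      rw [mwd_snoc v xs ⟨u.length, hl⟩ e2 rfl, mwd_snoc v' xs' x' e1 (by simp)]
      exact tp_append (tp_map _ h1.symm) (tp_append (u := [_]) (u' := [_]) rfl (tp_map _ h2.symm))
    exact ⟨N, k + 1, fun M M' v xs v' xs' e => ⟨key _ _ _ _ _ _ e, key _ _ _ _ _ _ e.symm⟩⟩

theorem mwd_zero {N : ℕ} {M : TModel} (xs : Fin 0 → Fin (M.len + 1)) :
    mwd N M (asg (fun _ => 0) xs) = (fun x => (x, fun _ => True)) (lt N M 0) ::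
      (wd N M 1).map (fun x => (x, fun _ => False)) := by
  rw [mwd, range_split _ (Nat.succ_pos M.len), wd, List.map_map]
  have hm : ∀ t, ml N M (asg (fun _ => 0) xs) t = (lt N M t, fun _ => 0 = t) := by
    intro t
    refine Prod.ext rfl (funext fun i => ?_)
    rcases i with i | i
    · simp [ml, asg]
    · exact i.elim0
  simp only [List.range_zero, List.map_nil, List.nil_append, hm]
  refine congrArg₂ List.cons (by simp) ?_
  · refine List.map_congr_left fun t ht => ?_
    have := List.left_le_of_mem_range' ht
    rw [hm]
    refine Prod.ext rfl (funext fun i => ?_)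
    simp; omega

end Kamp

/-- Kamp's theorem over finite timelines. -/
theorem kamp (θ : linLang.Formula (Fin 1)) :
    ∃ φ : LTL, ∀ M : TModel, M.realizeAt θ 0 ↔ LTL.sat M 0 φ := by
  classical
  obtain ⟨N, k, h⟩ := Kamp.detF θ
  let Good : (Fin N → Prop) × Kamp.Ty (Fin N → Prop) k → Prop := fun p =>
    ∃ M : TModel, Kamp.lt N M 0 = p.1 ∧ Kamp.tp k (Kamp.wd N M 1) = p.2 ∧ M.realizeAt θ 0
  have hD : Kamp.D Set.univ (fun w : List (Fin N → Prop) =>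
      ∃ p, w.head? = some p.1 ∧ Kamp.Nx (fun r => Kamp.tp k r = p.2) w ∧ Good p) :=
    Kamp.D.ex fun p => (Kamp.D.letter p.1).and ((Kamp.D_tp k p.2).next.and (Kamp.D.const _))
  obtain ⟨φ, hφ⟩ := Kamp.D_ltl hD
  refine ⟨φ, fun M => ?_⟩
  rw [hφ M 0 (Nat.zero_le _)]
  dsimp only
  rw [Kamp.wd_cons (Nat.zero_le _)]
  constructor
  · intro hM
    exact ⟨(Kamp.lt N M 0, Kamp.tp k (Kamp.wd N M 1)), rfl, rfl, M, rfl, rfl, hM⟩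
  · rintro ⟨⟨a, τ⟩, h1, h2, M', h3, h4, h5⟩
    simp only [List.head?_cons, Option.some.injEq] at h1
    rw [Kamp.Nx_cons] at h2
    dsimp only at h3 h4 h2
    have hz : ∀ M : TModel, M.realizeAt θ 0 ↔ Kamp.Rz θ M (fun _ => 0) default := by
      intro M
      unfold TModel.realizeAt Kamp.Rz FirstOrder.Language.Formula.Realize
      rw [Subsingleton.elim (default : Fin 0 → Fin (M.len + 1)) _]
    rw [hz] at h5 ⊢
    refine (h M' M (fun _ => 0) default (fun _ => 0) default ?_).1 h5
    rw [Kamp.mwd_zero, Kamp.mwd_zero, h3, ← h1]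
    exact Kamp.tp_append (u := [_]) (u' := [_]) rfl (Kamp.tp_map _ (h4.trans h2.symm))
end
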